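/- Suppose the lattice operator H is stable and admits a lattice Green's function 𝒢. Let p, α ∈ ℕ₀, c > 0, and let u ∈ 𝓗¹ satisfy |H[u](ℓ)| ≤ c⟨ℓ⟩^{−d−p}(log⟨ℓ⟩)^α for all ℓ ∈ Λ, and assume the moments vanish: 𝓘_i[u] = 0 for i = 0,…,p−1. Then for each j ∈ {1,2} there is a constant C such that |D^j u(ℓ)| ≤ C⟨ℓ⟩^{2−d−p−j}(log⟨ℓ⟩)^{α+1} for all ℓ ∈ Λ. Moreover, for any j ≥ 3 the same bound holds provided additionally |D^m H[u](ℓ)| ≤ c⟨ℓ⟩^{−d−p−m}(log⟨ℓ⟩)^α for all ℓ ∈ Λ and m = 1,…,j−2. -/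

import Mathlib

noncomputable section

open scoped BigOperators
open MeasureTheory Filter Topology

namespace Defect

abbrev Vec (n : ℕ) : Type := Fin n → ℝ

/-- Euclidean norm of a vector in `ℝ^n`. -/
def enorm {n : ℕ} (v : Vec n) : ℝ := Real.sqrt (∑ i, (v i) ^ 2)

/-- `⟨x⟩ := |x| + 2`. -/
def ang {n : ℕ} (v : Vec n) : ℝ := enorm v + 2

def dotV {n : ℕ} (x y : Vec n) : ℝ := ∑ i, x i * y i

/-- Matrix-vector product for a plain `Fin N → Fin N → ℝ` matrix. -/
def mulV {N : ℕ} (M : Fin N → Fin N → ℝ) (v : Vec N) : Vec N := fun i => ∑ j, M i j * v j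

/-- Euclidean (Frobenius) norm of an `N × N` array. -/
def mnorm {N : ℕ} (M : Fin N → Fin N → ℝ) : ℝ := Real.sqrt (∑ i, ∑ j, (M i j) ^ 2)

/-- The lattice point `A z` for `z ∈ ℤ^d`. -/
def latticePt (d : ℕ) (A : Matrix (Fin d) (Fin d) ℝ) (z : Fin d → ℤ) : Vec d :=
  fun i => ∑ j, A i j * (z j : ℝ)

/-- The Bravais lattice `Λ = A ℤ^d`. -/
def Lattice (d : ℕ) (A : Matrix (Fin d) (Fin d) ℝ) : Set (Vec d) :=
  Set.range (latticePt d A)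

/-- First-order finite difference `D_ρ u (ℓ) = u(ℓ+ρ) - u(ℓ)`. -/
def D1 {d : ℕ} {M : Type} [AddCommGroup M] (ρ : Vec d) (u : Vec d → M) (ℓ : Vec d) : M :=
  u (ℓ + ρ) - u ℓ

/-- Iterated finite difference `D_{ρ₁} ⋯ D_{ρ_j} u (ℓ)` (closed form). -/
def Dmulti {d : ℕ} {M : Type} [AddCommGroup M] [Module ℝ M] {j : ℕ}
    (ρs : Fin j → Vec d) (u : Vec d → M) (ℓ : Vec d) : M :=
  ∑ S : Finset (Fin j), ((-1 : ℝ) ^ (j - S.card)) • u (ℓ + ∑ i ∈ S, ρs i)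

/-- `|Du(ℓ)|²`, the squared Euclidean norm of the stencil of first differences. -/
def Dnorm1Sq {d N : ℕ} (R : Finset (Vec d)) (u : Vec d → Vec N) (ℓ : Vec d) : ℝ :=
  ∑ ρ ∈ R, (enorm (D1 ρ u ℓ)) ^ 2

/-- `|D^j u(ℓ)|`, the Euclidean norm of the array `(D_{ρ⃗} u(ℓ))_{ρ⃗ ∈ R^j}`. -/
def DnormJ {d N : ℕ} (R : Finset (Vec d)) (j : ℕ) (u : Vec d → Vec N) (ℓ : Vec d) : ℝ :=
  Real.sqrt (∑ ρs : Fin j → {x // x ∈ R},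
    (enorm (Dmulti (fun i => (ρs i : Vec d)) u ℓ)) ^ 2)

/-- The linearized lattice operator
`H[u](ℓ) = ∑_{σ,ρ∈R} (C_{σρ} D_ρ u(ℓ-σ) - C_{σρ} D_ρ u(ℓ))`. -/
def Hop (d N : ℕ) (R : Finset (Vec d)) (C : Vec d → Vec d → Fin N → Fin N → ℝ)
    (u : Vec d → Vec N) (ℓ : Vec d) : Vec N :=
  ∑ σ ∈ R, ∑ ρ ∈ R, (mulV (C σ ρ) (D1 ρ u (ℓ - σ)) - mulV (C σ ρ) (D1 ρ u ℓ))

/-- `u ∈ 𝓗¹`. -/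
def InH1 {d N : ℕ} (A : Matrix (Fin d) (Fin d) ℝ) (R : Finset (Vec d))
    (u : Vec d → Vec N) : Prop :=
  Summable fun z : Fin d → ℤ => Dnorm1Sq R u (latticePt d A z)

/-- `u ∈ 𝓗ᶜ` : the stencil `Du` has bounded support on the lattice. -/
def InHc {d N : ℕ} (A : Matrix (Fin d) (Fin d) ℝ) (R : Finset (Vec d))
    (u : Vec d → Vec N) : Prop :=
  ∃ rad : ℝ, ∀ z : Fin d → ℤ, rad ≤ enorm (latticePt d A z) →
    ∀ ρ ∈ R, D1 ρ u (latticePt d A z) = 0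

/-- Stability of the lattice operator `H`. -/
def IsStable (d N : ℕ) (A : Matrix (Fin d) (Fin d) ℝ) (R : Finset (Vec d))
    (C : Vec d → Vec d → Fin N → Fin N → ℝ) : Prop :=
  ∃ c₀ : ℝ, 0 < c₀ ∧ ∀ u : Vec d → Vec N, InHc A R u →
    c₀ * (∑' z : Fin d → ℤ, Dnorm1Sq R u (latticePt d A z)) ≤
      ∑' z : Fin d → ℤ, ∑ σ ∈ R, ∑ ρ ∈ R,
        dotV (D1 σ u (latticePt d A z)) (mulV (C σ ρ) (D1 ρ u (latticePt d A z)))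

/-- `k`-th column of a matrix-valued function. -/
def col {d N : ℕ} (G : Vec d → Fin N → Fin N → ℝ) (k : Fin N) : Vec d → Vec N :=
  fun x i => G x i k

/-- `|D^j 𝒢(ℓ)|` for matrix-valued `𝒢`. -/
def DnormJmat {d N : ℕ} (R : Finset (Vec d)) (j : ℕ)
    (G : Vec d → Fin N → Fin N → ℝ) (ℓ : Vec d) : ℝ :=
  Real.sqrt (∑ k : Fin N, (DnormJ R j (col G k) ℓ) ^ 2)

/-- `𝒢` is a lattice Green's function for `H`. -/
def IsLatticeGreen (d N : ℕ) (A : Matrix (Fin d) (Fin d) ℝ) (R : Finset (Vec d))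
    (C : Vec d → Vec d → Fin N → Fin N → ℝ) (G : Vec d → Fin N → Fin N → ℝ) : Prop :=
  (∀ (k : Fin N) (z : Fin d → ℤ),
      Hop d N R C (col G k) (latticePt d A z) =
        if latticePt d A z = 0 then Pi.single k 1 else 0) ∧
  (∀ j : ℕ, 1 ≤ j → ∃ cj : ℝ, ∀ z : Fin d → ℤ,
      DnormJmat R j G (latticePt d A z) ≤
        cj * ang (latticePt d A z) ^ ((2 : ℝ) - d - j))

/-- A symmetric array `b ∈ (ℝ^{Fin d})^{⊙ i}`. -/
def SymArr {d i : ℕ} (b : (Fin i → Fin d) → ℝ) : Prop :=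
  ∀ (π : Equiv.Perm (Fin i)) (σv : Fin i → Fin d), b (σv ∘ π) = b σv

/-- `b : D_𝒮^i f`, a multipole term built from the basis `s`. -/
def multipole (d N : ℕ) (s : Fin d → Vec d) (i : ℕ) (b : (Fin i → Fin d) → ℝ)
    (f : Vec d → Vec N) : Vec d → Vec N :=
  fun ℓ => ∑ σv : Fin i → Fin d, b σv • Dmulti (fun m => s (σv m)) f ℓ

/-- Iterated partial derivative `∂_{j₁} ⋯ ∂_{j_i} f (x)`. -/
def pderivMulti {d : ℕ} (i : ℕ) (js : Fin i → Fin d) (f : Vec d → ℝ) (x : Vec d) : ℝ :=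
  iteratedFDeriv ℝ i f x (fun m => Pi.single (js m) (1 : ℝ))

/-- `a : ∇^i f (x)` for a tensor `a ∈ (ℝ^d)^{⊗ i}`. -/
def aContract {d : ℕ} (i : ℕ) (a : (Fin i → Fin d) → ℝ) (f : Vec d → ℝ) (x : Vec d) : ℝ :=
  ∑ js : Fin i → Fin d, a js * pderivMulti i js f x

/-- Elementary tensor `σ⃗^⊗` as an array. -/
def tensorPow {d k : ℕ} (σs : Fin k → Vec d) : (Fin k → Fin d) → ℝ :=
  fun js => ∏ m, σs m (js m)

/-- Symmetric tensor product `σ⃗^⊙`. -/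
def symTensor {d k : ℕ} (σs : Fin k → Vec d) : (Fin k → Fin d) → ℝ :=
  fun js => ((k.factorial : ℝ))⁻¹ * ∑ π : Equiv.Perm (Fin k), tensorPow (σs ∘ π) js

/-- A symmetric tensor (array invariant under index permutations). -/
def SymTensor {d k : ℕ} (T : (Fin k → Fin d) → ℝ) : Prop :=
  ∀ (π : Equiv.Perm (Fin k)) (js : Fin k → Fin d), T (js ∘ π) = T js

/-- `∂V/∂g_ρ (gs)` as a vector in `ℝ^N`. -/
def gradV {d N : ℕ} (R : Finset (Vec d)) (V : ({x // x ∈ R} → Vec N) → ℝ)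
    (ρ : {x // x ∈ R}) (gs : {x // x ∈ R} → Vec N) : Vec N :=
  fun i => fderiv ℝ V gs (Pi.single ρ (Pi.single i 1))

/-- The finite-difference stencil `Du(ℓ) = (D_ρ u(ℓ))_{ρ ∈ R}`. -/
def Dstencil {d N : ℕ} (R : Finset (Vec d)) (u : Vec d → Vec N) (ℓ : Vec d) :
    {x // x ∈ R} → Vec N :=
  fun ρ => D1 (ρ : Vec d) u ℓ

/-- `C_{σρ} = ∂²V/∂g_σ ∂g_ρ (0)`. -/
def CofV {d N : ℕ} (R : Finset (Vec d)) (V : ({x // x ∈ R} → Vec N) → ℝ)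
    (σ ρ : Vec d) (i j : Fin N) : ℝ :=
  if hσ : σ ∈ R then
    if hρ : ρ ∈ R then
      iteratedFDeriv ℝ 2 V 0
        ![Pi.single ⟨σ, hσ⟩ (Pi.single i 1), Pi.single ⟨ρ, hρ⟩ (Pi.single j 1)]
    else 0
  else 0

/-- Summand of the first variation `δE(u)[v]` at a site. -/
def deltaEsite {d N : ℕ} (R : Finset (Vec d)) (V : ({x // x ∈ R} → Vec N) → ℝ)
    (u v : Vec d → Vec N) (ℓ : Vec d) : ℝ :=
  ∑ ρ ∈ R.attach, dotV (gradV R V ρ (Dstencil R u ℓ)) (D1 (ρ : Vec d) v ℓ)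

/-- The pointwise atomistic force `δE(u)(ℓ)`. -/
def deltaEpt {d N : ℕ} (R : Finset (Vec d)) (V : ({x // x ∈ R} → Vec N) → ℝ)
    (u : Vec d → Vec N) (ℓ : Vec d) : Vec N :=
  ∑ ρ ∈ R.attach,
    (gradV R V ρ (Dstencil R u (ℓ - (ρ : Vec d))) - gradV R V ρ (Dstencil R u ℓ))

/-- Point symmetry of the site potential. -/
def PointSym {d N : ℕ} (R : Finset (Vec d)) (hRsym : ∀ ρ ∈ R, -ρ ∈ R)
    (V : ({x // x ∈ R} → Vec N) → ℝ) : Prop :=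
  ∀ gs : {x // x ∈ R} → Vec N,
    V (fun ρ => -(gs ⟨-(ρ : Vec d), hRsym _ ρ.2⟩)) = V gs

/-- The Cauchy–Born elasticity tensor `ℂ_{iajb}`. -/
def CB {d N : ℕ} (A : Matrix (Fin d) (Fin d) ℝ) (R : Finset (Vec d))
    (C : Vec d → Vec d → Fin N → Fin N → ℝ)
    (i : Fin N) (a : Fin d) (j : Fin N) (b : Fin d) : ℝ :=
  (|A.det|)⁻¹ * ∑ ρ ∈ R, ∑ σ ∈ R, C ρ σ i j * ρ a * σ b

abbrev E (d : ℕ) : Type := Fin d → ℤ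

def nn {d : ℕ} (z : E d) : ℕ := Finset.univ.sup (fun i => (z i).natAbs)

def J {d : ℕ} (z : E d) : ℝ := (nn z : ℝ) + 2

lemma natAbs_le_nn {d : ℕ} (z : E d) (i : Fin d) : (z i).natAbs ≤ nn z :=
  Finset.le_sup (f := fun i => (z i).natAbs) (Finset.mem_univ i)

lemma nn_le_iff {d : ℕ} (z : E d) (n : ℕ) : nn z ≤ n ↔ ∀ i, (z i).natAbs ≤ n := by
  simp [nn, Finset.sup_le_iff]

lemma nn_add_le {d : ℕ} (a b : E d) : nn (a + b) ≤ nn a + nn b := by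
  rw [nn_le_iff]; intro i
  have := natAbs_le_nn a i; have := natAbs_le_nn b i
  simp only [Pi.add_apply]; omega

lemma nn_neg {d : ℕ} (a : E d) : nn (-a) = nn a := by
  simp [nn]

lemma nn_zero {d : ℕ} : nn (0 : E d) = 0 := by
  have : nn (0 : E d) ≤ 0 := by rw [nn_le_iff]; simp
  omega

lemma nn_sub_le {d : ℕ} (a b : E d) : nn (a - b) ≤ nn a + nn b := by
  rw [sub_eq_add_neg]; have := nn_add_le a (-b); rwa [nn_neg] at this

lemma J_two {d : ℕ} (z : E d) : 2 ≤ J z := by unfold J; have := Nat.cast_nonneg (α := ℝ) (nn z); linarith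

lemma J_pos {d : ℕ} (z : E d) : 0 < J z := by linarith [J_two z]

lemma J_neg {d : ℕ} (z : E d) : J (-z) = J z := by simp [J, nn_neg]

lemma J_add_le {d : ℕ} (a b : E d) : J (a + b) ≤ J a * J b := by
  have h : ((nn (a + b) : ℕ) : ℝ) ≤ nn a + nn b := by exact_mod_cast nn_add_le a b
  have h1 := Nat.cast_nonneg (α := ℝ) (nn a)
  have h2 := Nat.cast_nonneg (α := ℝ) (nn b)
  unfold J; nlinarith

lemma rpow_comp {x y K : ℝ} (hx : 0 < x) (hy : 0 < y) (hK : 1 ≤ K) (h1 : x ≤ K * y)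
    (h2 : y ≤ K * x) (e : ℝ) : x ^ e ≤ K ^ |e| * y ^ e := by
  have hK0 : 0 < K := by linarith
  rcases le_total 0 e with he | he
  · rw [abs_of_nonneg he, ← Real.mul_rpow hK0.le hy.le]
    exact Real.rpow_le_rpow hx.le h1 he
  · rw [abs_of_nonpos he, Real.rpow_neg hK0.le, ← div_eq_inv_mul, ← Real.div_rpow hy.le hK0.le]
    apply Real.rpow_le_rpow_of_nonpos (by positivity) _ he
    rw [div_le_iff₀ hK0]; linarith

lemma half_le_log {y : ℝ} (hy : 2 ≤ y) : 1 / 2 ≤ Real.log y := by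
  have h := Real.log_two_gt_d9
  have := Real.log_le_log (by norm_num) hy
  linarith

lemma log_comp {x y K : ℝ} (hx : 0 < x) (hy : 2 ≤ y) (hK : 1 ≤ K) (h1 : x ≤ K * y) :
    Real.log x ≤ (1 + 2 * Real.log K) * Real.log y := by
  have h := half_le_log hy
  have h2 := Real.log_le_log hx h1
  rw [Real.log_mul (by linarith) (by linarith)] at h2
  have := Real.log_nonneg hK
  nlinarith

lemma J_shift {d : ℕ} (z a : E d) (e : ℝ) : J (z + a) ^ e ≤ J a ^ |e| * J z ^ e := by
  apply rpow_comp (J_pos _) (J_pos _) (by linarith [J_two a])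
  · rw [mul_comm]; exact J_add_le z a
  · have := J_add_le (z + a) (-a)
    rw [J_neg] at this
    simpa [mul_comm] using this

/-- The box. -/
def box (d n : ℕ) : Finset (E d) := Fintype.piFinset (fun _ => Finset.Icc (-(n : ℤ)) n)

lemma mem_box {d n : ℕ} (z : E d) : z ∈ box d n ↔ nn z ≤ n := by
  rw [nn_le_iff, box, Fintype.mem_piFinset]
  refine forall_congr' fun i => ?_
  rw [Finset.mem_Icc]; omega

lemma card_box (d n : ℕ) : (box d n).card = (2 * n + 1) ^ d := by
  rw [box, Fintype.card_piFinset]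
  simp only [Int.card_Icc, Finset.prod_const, Finset.card_univ, Fintype.card_fin]
  congr 1; omega

lemma pow_sub_le {a b : ℝ} (hb : 0 ≤ b) (hab : b ≤ a) (k : ℕ) :
    a ^ (k + 1) ≤ b ^ (k + 1) + (k + 1) * a ^ k * (a - b) := by
  induction k with
  | zero => simp
  | succ k ih =>
    have h1 : b ^ (k + 1) ≤ a ^ (k + 1) := pow_le_pow_left₀ hb hab _
    have h2 : a * a ^ (k + 1) ≤ a * (b ^ (k + 1) + (k + 1) * a ^ k * (a - b)) :=
      mul_le_mul_of_nonneg_left ih (by linarith)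
    have h3 : b ^ (k + 1) * (a - b) ≤ a ^ (k + 1) * (a - b) :=
      mul_le_mul_of_nonneg_right h1 (by linarith)
    have e3 : a ^ (k + 1) = a * a ^ k := by ring
    have e1 : a ^ (k + 1 + 1) = a * a ^ (k + 1) := by ring
    have e2 : b ^ (k + 1 + 1) = b * b ^ (k + 1) := by ring
    rw [e1, e2]
    push_cast
    rw [e3] at h2 h3 ⊢
    generalize b ^ (k + 1) = B at *
    generalize a ^ k = X at *
    linarith

lemma card_sphere {d : ℕ} (hd : 1 ≤ d) (n : ℕ) (T : Finset (E d)) (hT : ∀ z ∈ T, nn z = n) :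
    (T.card : ℝ) ≤ (2 * d * 2 ^ (d - 1)) * ((n : ℝ) + 2) ^ (d - 1) := by
  obtain ⟨k, rfl⟩ : ∃ k, d = k + 1 := ⟨d - 1, by omega⟩
  simp only [Nat.add_sub_cancel]
  have hn0 := Nat.cast_nonneg (α := ℝ) n
  rcases Nat.eq_zero_or_pos n with rfl | hn
  · have : T.card ≤ (box (k + 1) 0).card := Finset.card_le_card fun z hz => by
      rw [mem_box, hT z hz]
    rw [card_box] at this
    have h1 : (T.card : ℝ) ≤ 1 := by exact_mod_cast (by simpa using this)
    have h2 : (1 : ℝ) ≤ 2 ^ k := one_le_pow₀ (by norm_num)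
    have hk := Nat.cast_nonneg (α := ℝ) k
    push_cast
    rw [zero_add]
    have h3 : (1 : ℝ) ≤ 2 ^ k * 2 ^ k := by nlinarith
    have h4 : 0 ≤ (k : ℝ) * (2 ^ k * 2 ^ k) := by positivity
    nlinarith
  · have hsub : T ⊆ box (k + 1) n \ box (k + 1) (n - 1) := fun z hz => by
      have := hT z hz
      rw [Finset.mem_sdiff, mem_box, mem_box]; omega
    have hb : box (k + 1) (n - 1) ⊆ box (k + 1) n := fun z hz => by
      rw [mem_box] at *; omega
    have hc := Finset.card_le_card hsub
    have hcc := Finset.card_sdiff_add_card_eq_card hb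
    rw [card_box, card_box] at hcc
    have hcc' : ((box (k + 1) n \ box (k + 1) (n - 1)).card : ℝ) + (2 * ((n - 1 : ℕ) : ℝ) + 1) ^ (k + 1)
        = (2 * (n : ℝ) + 1) ^ (k + 1) := by exact_mod_cast hcc
    have hc' : (T.card : ℝ) ≤ (box (k + 1) n \ box (k + 1) (n - 1)).card := by exact_mod_cast hc
    have e : ((n - 1 : ℕ) : ℝ) = n - 1 := by push_cast [hn]; ring
    rw [e] at hcc'
    have hn1 : (1 : ℝ) ≤ n := by exact_mod_cast hn
    have := pow_sub_le (a := 2 * (n : ℝ) + 1) (b := 2 * ((n : ℝ) - 1) + 1) (by linarith) (by linarith) k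
    have h5 : (2 * (n : ℝ) + 1) ^ k ≤ 2 ^ k * ((n : ℝ) + 2) ^ k := by
      rw [← mul_pow]; exact pow_le_pow_left₀ (by linarith) (by linarith) _
    have hk := Nat.cast_nonneg (α := ℝ) k
    have h6 : ((k : ℝ) + 1) * (2 * (n : ℝ) + 1) ^ k ≤ ((k : ℝ) + 1) * (2 ^ k * ((n : ℝ) + 2) ^ k) :=
      mul_le_mul_of_nonneg_left h5 (by linarith)
    push_cast
    nlinarith

/-- Radial summation. -/
lemma sum_radial {d : ℕ} (hd : 1 ≤ d) (φ : ℕ → ℝ) (hφ : ∀ n, 0 ≤ φ n) (T : Finset (E d)) :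
    ∑ z ∈ T, φ (nn z) ≤
      (2 * d * 2 ^ (d - 1)) * ∑ n ∈ T.image nn, ((n : ℝ) + 2) ^ (d - 1) * φ n := by
  rw [Finset.mul_sum, ← Finset.sum_fiberwise_of_maps_to (t := T.image nn) (g := nn)
    (fun z hz => Finset.mem_image_of_mem _ hz)]
  refine Finset.sum_le_sum fun n _ => ?_
  have h1 : ∑ z ∈ T with nn z = n, φ (nn z) = ((T.filter fun z => nn z = n).card : ℝ) * φ n := by
    rw [Finset.sum_congr rfl (g := fun _ => φ n), Finset.sum_const, nsmul_eq_mul]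
    intro z hz; rw [(Finset.mem_filter.1 hz).2]
  rw [h1, ← mul_assoc]
  exact mul_le_mul_of_nonneg_right
    (card_sphere hd n _ fun z hz => (Finset.mem_filter.1 hz).2) (hφ n)

lemma harm_le (r : ℕ) : ∑ n ∈ Finset.range (r + 1), ((n : ℝ) + 2)⁻¹ ≤ Real.log ((r : ℝ) + 2) := by
  induction r with
  | zero => simp; linarith [half_le_log (y := 2) le_rfl]
  | succ r ih =>
    rw [Finset.sum_range_succ]
    have hr := Nat.cast_nonneg (α := ℝ) r
    have h := Real.one_sub_inv_le_log_of_pos (x := ((r : ℝ) + 3) / (r + 2)) (by positivity)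
    rw [Real.log_div (by positivity) (by positivity)] at h
    have e : 1 - (((r : ℝ) + 3) / (r + 2))⁻¹ = ((r : ℝ) + 3)⁻¹ := by field_simp; ring
    rw [e] at h
    push_cast
    rw [show (r : ℝ) + 1 + 2 = r + 3 by ring]
    linarith

lemma tail_step (n : ℕ) : ((n : ℝ) + 2) ^ (-(3 / 2) : ℝ) ≤
    2 * ((Real.sqrt ((n : ℝ) + 1))⁻¹ - (Real.sqrt ((n : ℝ) + 2))⁻¹) := by
  have hn := Nat.cast_nonneg (α := ℝ) n
  have h2 : ((n : ℝ) + 2) ^ (-(3 / 2) : ℝ) = (((n : ℝ) + 2) * Real.sqrt ((n : ℝ) + 2))⁻¹ := by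
    rw [Real.rpow_neg (by positivity), Real.sqrt_eq_rpow]
    congr 1
    nth_rewrite 2 [← Real.rpow_one ((n : ℝ) + 2)]
    rw [← Real.rpow_add (by positivity)]; norm_num
  rw [h2]
  set a := Real.sqrt ((n : ℝ) + 1) with ha
  set b := Real.sqrt ((n : ℝ) + 2) with hb
  have ha0 : 0 < a := Real.sqrt_pos.2 (by linarith)
  have hb0 : 0 < b := Real.sqrt_pos.2 (by linarith)
  have ha2 : a * a = n + 1 := Real.mul_self_sqrt (by linarith)
  have hb2 : b * b = n + 2 := Real.mul_self_sqrt (by linarith)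
  have hab : a ≤ b := Real.sqrt_le_sqrt (by linarith)
  rw [← hb2]
  have e : a⁻¹ - b⁻¹ = 1 / (a * b * (a + b)) := by
    field_simp; nlinarith
  rw [e, ← mul_div_assoc, inv_eq_one_div, div_le_div_iff₀ (by positivity) (by positivity)]
  have : a * (a + b) ≤ b * (b + b) := by gcongr
  nlinarith [mul_pos ha0 hb0]

lemma tail_sum (r : ℕ) (T : Finset ℕ) (hT : ∀ n ∈ T, r ≤ n) :
    ∑ n ∈ T, ((n : ℝ) + 2) ^ (-(3 / 2) : ℝ) ≤ 4 * ((r : ℝ) + 2) ^ (-(1 / 2) : ℝ) := by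
  have hr := Nat.cast_nonneg (α := ℝ) r
  have hpos : ∀ n : ℕ, 0 ≤ ((n : ℝ) + 2) ^ (-(3 / 2) : ℝ) := fun n => by positivity
  obtain ⟨M, hM⟩ : ∃ M, T ⊆ Finset.Ico r (r + M) := by
    refine ⟨T.sup id + 1, fun n hn => ?_⟩
    have : n ≤ T.sup id := Finset.le_sup (f := id) hn
    have := hT n hn
    rw [Finset.mem_Ico]; omega
  have key : ∀ M : ℕ, ∑ n ∈ Finset.Ico r (r + M), ((n : ℝ) + 2) ^ (-(3 / 2) : ℝ) ≤
      2 * ((Real.sqrt ((r : ℝ) + 1))⁻¹ - (Real.sqrt (((r + M : ℕ) : ℝ) + 1))⁻¹) := by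
    intro M
    induction M with
    | zero => simp
    | succ M ih =>
      rw [← add_assoc, Finset.sum_Ico_succ_top (by omega)]
      have := tail_step (r + M)
      rw [show (((r + M + 1 : ℕ) : ℝ) + 1) = ((r + M : ℕ) : ℝ) + 2 by push_cast; ring]
      linarith
  have h1 := (Finset.sum_le_sum_of_subset_of_nonneg hM fun n _ _ => hpos n).trans (key M)
  have h2 : 0 ≤ (Real.sqrt (((r + M : ℕ) : ℝ) + 1))⁻¹ := by positivity
  have h3 : (Real.sqrt ((r : ℝ) + 1))⁻¹ ≤ 2 * ((r : ℝ) + 2) ^ (-(1 / 2) : ℝ) := by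
    rw [Real.rpow_neg (by positivity), ← Real.sqrt_eq_rpow]
    have : Real.sqrt ((r : ℝ) + 2) ≤ 2 * Real.sqrt (r + 1) := by
      rw [Real.sqrt_le_left (by positivity), mul_pow, Real.sq_sqrt (by positivity)]; linarith
    have ha0 : 0 < Real.sqrt ((r : ℝ) + 1) := Real.sqrt_pos.2 (by linarith)
    have hb0 : 0 < Real.sqrt ((r : ℝ) + 2) := Real.sqrt_pos.2 (by linarith)
    rw [inv_eq_one_div, ← div_eq_mul_inv, div_le_div_iff₀ ha0 hb0]; linarith
  linarith

lemma log_growth (α : ℕ) : ∃ C : ℝ, 0 ≤ C ∧ ∀ x y : ℝ, 2 ≤ y → y ≤ x →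
    Real.log x ^ α ≤ C * (x / y) ^ (1 / 2 : ℝ) * Real.log y ^ α := by
  rcases Nat.eq_zero_or_pos α with rfl | hα
  · refine ⟨1, zero_le_one, fun x y hy hxy => ?_⟩
    have : 1 ≤ (x / y) ^ (1 / 2 : ℝ) :=
      Real.one_le_rpow ((one_le_div (by linarith)).2 hxy) (by norm_num)
    simpa using this
  · set β : ℝ := 1 / (2 * α) with hβ
    have hα' : (0 : ℝ) < α := by exact_mod_cast hα
    have hβ0 : 0 < β := by positivity
    refine ⟨(1 + 2 / β) ^ α, by positivity, fun x y hy hxy => ?_⟩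
    have hy0 : 0 < y := by linarith
    have ht : 1 ≤ x / y := (one_le_div hy0).2 hxy
    have h1 : Real.log x = Real.log y + Real.log (x / y) := by
      rw [Real.log_div (by linarith) (by linarith)]; ring
    have h2 := Real.log_le_rpow_div (x := x / y) (by linarith) hβ0
    have h3 := half_le_log hy
    have h4 : 1 ≤ (x / y) ^ β := Real.one_le_rpow ht hβ0.le
    have h5 : Real.log x ≤ (1 + 2 / β) * (x / y) ^ β * Real.log y := by
      have h6 : (x / y) ^ β / β ≤ (x / y) ^ β / β * (2 * Real.log y) :=
        le_mul_of_one_le_right (by positivity) (by linarith)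
      have h7 : Real.log y ≤ (x / y) ^ β * Real.log y := le_mul_of_one_le_left (by linarith) h4
      have : (1 + 2 / β) * (x / y) ^ β * Real.log y =
        (x / y) ^ β * Real.log y + (x / y) ^ β / β * (2 * Real.log y) := by ring
      linarith
    have h0 : 0 ≤ Real.log x := Real.log_nonneg (by linarith)
    calc Real.log x ^ α ≤ ((1 + 2 / β) * (x / y) ^ β * Real.log y) ^ α := pow_le_pow_left₀ h0 h5 _
      _ = _ := by
        rw [mul_pow, mul_pow, ← Real.rpow_natCast ((x / y) ^ β) α, ← Real.rpow_mul (by linarith)]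
        congr 3
        rw [hβ]; field_simp

lemma sum_B1 {d : ℕ} (hd : 1 ≤ d) (α : ℕ) : ∃ C : ℝ, 0 ≤ C ∧ ∀ (r : ℕ) (T : Finset (E d)),
    (∀ m ∈ T, nn m ≤ r) →
    ∑ m ∈ T, J m ^ (-(d : ℝ)) * Real.log (J m) ^ α ≤ C * Real.log ((r : ℝ) + 2) ^ (α + 1) := by
  refine ⟨2 * d * 2 ^ (d - 1), by positivity, fun r T hT => ?_⟩
  have hlog : ∀ n : ℕ, 0 ≤ Real.log ((n : ℝ) + 2) := fun n =>
    Real.log_nonneg (by have := Nat.cast_nonneg (α := ℝ) n; linarith)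
  have h := sum_radial hd (fun n => ((n : ℝ) + 2) ^ (-(d : ℝ)) * Real.log ((n : ℝ) + 2) ^ α)
    (fun n => by have := hlog n; positivity) T
  refine h.trans (mul_le_mul_of_nonneg_left ?_ (by positivity))
  calc ∑ n ∈ T.image nn, ((n : ℝ) + 2) ^ (d - 1) * (((n : ℝ) + 2) ^ (-(d : ℝ)) * Real.log ((n : ℝ) + 2) ^ α)
      ≤ ∑ n ∈ T.image nn, ((n : ℝ) + 2)⁻¹ * Real.log ((r : ℝ) + 2) ^ α := by
        refine Finset.sum_le_sum fun n hn => ?_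
        obtain ⟨z, hz, rfl⟩ := Finset.mem_image.1 hn
        have hzr : ((nn z : ℕ) : ℝ) ≤ r := by exact_mod_cast hT z hz
        have e : ((nn z : ℝ) + 2) ^ (d - 1) * ((nn z : ℝ) + 2) ^ (-(d : ℝ)) = ((nn z : ℝ) + 2)⁻¹ := by
          rw [← Real.rpow_natCast, ← Real.rpow_add (by positivity), ← Real.rpow_neg_one]
          congr 1; push_cast [hd]; ring
        rw [← mul_assoc, e]
        refine mul_le_mul_of_nonneg_left (pow_le_pow_left₀ (hlog _) ?_ _) (by positivity)
        exact Real.log_le_log (by positivity) (by linarith)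
    _ ≤ ∑ n ∈ Finset.range (r + 1), ((n : ℝ) + 2)⁻¹ * Real.log ((r : ℝ) + 2) ^ α := by
        refine Finset.sum_le_sum_of_subset_of_nonneg ?_ fun n _ _ => by
          have := hlog r; positivity
        intro n hn
        obtain ⟨z, hz, rfl⟩ := Finset.mem_image.1 hn
        have := hT z hz
        rw [Finset.mem_range]; omega
    _ ≤ _ := by
        rw [← Finset.sum_mul, pow_succ, mul_comm]
        exact mul_le_mul_of_nonneg_left (harm_le r) (pow_nonneg (hlog r) _)

lemma sum_B2 {d : ℕ} (hd : 1 ≤ d) (α : ℕ) (s : ℝ) (hs : 1 ≤ s) : ∃ C : ℝ, 0 ≤ C ∧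
    ∀ (r : ℕ) (T : Finset (E d)), (∀ m ∈ T, r ≤ nn m) →
    ∑ m ∈ T, J m ^ (-(d : ℝ) - s) * Real.log (J m) ^ α ≤
      C * (((r : ℝ) + 2) ^ (-s) * Real.log ((r : ℝ) + 2) ^ α) := by
  obtain ⟨C₁, hC₁, hlg⟩ := log_growth α
  refine ⟨2 * d * 2 ^ (d - 1) * (C₁ * 4), by positivity, fun r T hT => ?_⟩
  have hlog : ∀ n : ℕ, 0 ≤ Real.log ((n : ℝ) + 2) := fun n =>
    Real.log_nonneg (by have := Nat.cast_nonneg (α := ℝ) n; linarith)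
  have hr := Nat.cast_nonneg (α := ℝ) r
  have h := sum_radial hd (fun n => ((n : ℝ) + 2) ^ (-(d : ℝ) - s) * Real.log ((n : ℝ) + 2) ^ α)
    (fun n => by have := hlog n; positivity) T
  refine h.trans ?_
  rw [mul_assoc (2 * (d : ℝ) * 2 ^ (d - 1))]
  refine mul_le_mul_of_nonneg_left ?_ (by positivity)
  set L := Real.log ((r : ℝ) + 2) ^ α with hL
  have hL0 : 0 ≤ L := pow_nonneg (hlog r) _
  calc ∑ n ∈ T.image nn, ((n : ℝ) + 2) ^ (d - 1) * (((n : ℝ) + 2) ^ (-(d : ℝ) - s) * Real.log ((n : ℝ) + 2) ^ α)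
      ≤ ∑ n ∈ T.image nn, ((n : ℝ) + 2) ^ (-(3 / 2) : ℝ) * (C₁ * ((r : ℝ) + 2) ^ (-(s - 1 / 2)) * L) := by
        refine Finset.sum_le_sum fun n hn => ?_
        obtain ⟨z, hz, rfl⟩ := Finset.mem_image.1 hn
        have hzr : (r : ℝ) ≤ ((nn z : ℕ) : ℝ) := by exact_mod_cast hT z hz
        have hx : (0 : ℝ) < (nn z : ℝ) + 2 := by positivity
        have hy : (0 : ℝ) < (r : ℝ) + 2 := by positivity
        have e : ((nn z : ℝ) + 2) ^ (d - 1) * ((nn z : ℝ) + 2) ^ (-(d : ℝ) - s) = ((nn z : ℝ) + 2) ^ (-1 - s) := by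
          rw [← Real.rpow_natCast, ← Real.rpow_add hx]
          congr 1; push_cast [hd]; ring
        rw [← mul_assoc, e]
        have h1 := hlg ((nn z : ℝ) + 2) ((r : ℝ) + 2) (by linarith) (by linarith)
        rw [Real.div_rpow hx.le hy.le, ← hL] at h1
        have h2 : ((nn z : ℝ) + 2) ^ (-(s - 1)) ≤ ((r : ℝ) + 2) ^ (-(s - 1)) :=
          Real.rpow_le_rpow_of_nonpos hy (by linarith) (by linarith)
        have e2 : ((nn z : ℝ) + 2) ^ (-1 - s) * ((nn z : ℝ) + 2) ^ (1 / 2 : ℝ) =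
            ((nn z : ℝ) + 2) ^ (-(3 / 2) : ℝ) * ((nn z : ℝ) + 2) ^ (-(s - 1)) := by
          rw [← Real.rpow_add hx, ← Real.rpow_add hx]; congr 1; ring
        have e3 : ((r : ℝ) + 2) ^ (-(s - 1 / 2)) = ((r : ℝ) + 2) ^ (-(s - 1)) / ((r : ℝ) + 2) ^ (1 / 2 : ℝ) := by
          rw [← Real.rpow_sub hy]; congr 1; ring
        calc ((nn z : ℝ) + 2) ^ (-1 - s) * Real.log ((nn z : ℝ) + 2) ^ α
            ≤ ((nn z : ℝ) + 2) ^ (-1 - s) * (C₁ * (((nn z : ℝ) + 2) ^ (1 / 2 : ℝ) / ((r : ℝ) + 2) ^ (1 / 2 : ℝ)) * L) :=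
              mul_le_mul_of_nonneg_left h1 (by positivity)
          _ = (((nn z : ℝ) + 2) ^ (-1 - s) * ((nn z : ℝ) + 2) ^ (1 / 2 : ℝ)) * (C₁ * L / ((r : ℝ) + 2) ^ (1 / 2 : ℝ)) := by ring
          _ = ((nn z : ℝ) + 2) ^ (-(3 / 2) : ℝ) * (C₁ * L / ((r : ℝ) + 2) ^ (1 / 2 : ℝ)) * ((nn z : ℝ) + 2) ^ (-(s - 1)) := by rw [e2]; ring
          _ ≤ ((nn z : ℝ) + 2) ^ (-(3 / 2) : ℝ) * (C₁ * L / ((r : ℝ) + 2) ^ (1 / 2 : ℝ)) * ((r : ℝ) + 2) ^ (-(s - 1)) :=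
              mul_le_mul_of_nonneg_left h2 (by positivity)
          _ = _ := by rw [e3]; ring
    _ ≤ (4 * ((r : ℝ) + 2) ^ (-(1 / 2) : ℝ)) * (C₁ * ((r : ℝ) + 2) ^ (-(s - 1 / 2)) * L) := by
        rw [← Finset.sum_mul]
        refine mul_le_mul_of_nonneg_right (tail_sum r _ ?_) (by positivity)
        intro n hn
        obtain ⟨z, hz, rfl⟩ := Finset.mem_image.1 hn
        exact hT z hz
    _ = _ := by
        have : ((r : ℝ) + 2) ^ (-s) = ((r : ℝ) + 2) ^ (-(1 / 2) : ℝ) * ((r : ℝ) + 2) ^ (-(s - 1 / 2)) := by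
          rw [← Real.rpow_add (by positivity)]; congr 1; ring
        rw [this]; ring

lemma log_J_nonneg {d : ℕ} (z : E d) : 0 ≤ Real.log (J z) :=
  Real.log_nonneg (by linarith [J_two z])

lemma summable_J {d : ℕ} (hd : 1 ≤ d) (α : ℕ) (s : ℝ) (hs : 1 ≤ s) :
    Summable fun m : E d => J m ^ (-(d : ℝ) - s) * Real.log (J m) ^ α := by
  obtain ⟨C, _, h⟩ := sum_B2 hd α s hs
  exact summable_of_sum_le (fun z => by have := log_J_nonneg z; have := J_pos z; positivity)
    (fun T => h 0 T fun _ _ => Nat.zero_le _)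

/-- differences -/
def Df {d : ℕ} (a : E d) (φ : E d → ℝ) : E d → ℝ := fun z => φ (z + a) - φ z

def DL {d : ℕ} : List (E d) → (E d → ℝ) → (E d → ℝ)
  | [], φ => φ
  | a :: l, φ => DL l (Df a φ)

lemma DL_add {d : ℕ} (l : List (E d)) (φ ψ : E d → ℝ) : DL l (φ + ψ) = DL l φ + DL l ψ := by
  induction l generalizing φ ψ with
  | nil => rfl
  | cons a l ih =>
    simp only [DL]; rw [← ih]; congr 1; ext z; simp [Df]; ring

lemma DL_smul {d : ℕ} (l : List (E d)) (c : ℝ) (φ : E d → ℝ) : DL l (c • φ) = c • DL l φ := by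
  induction l generalizing φ with
  | nil => rfl
  | cons a l ih =>
    simp only [DL]; rw [← ih]; congr 1; ext z; simp [Df]; ring

lemma DL_shift {d : ℕ} (l : List (E d)) (b : E d) (φ : E d → ℝ) :
    DL l (fun z => φ (z + b)) = fun z => DL l φ (z + b) := by
  induction l generalizing φ with
  | nil => rfl
  | cons a l ih =>
    simp only [DL]; rw [← ih]; congr 1; ext z; simp only [Df]; rw [show z + a + b = z + b + a by abel]

lemma DL_append {d : ℕ} (l l' : List (E d)) (φ : E d → ℝ) : DL (l ++ l') φ = DL l' (DL l φ) := by
  induction l generalizing φ with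
  | nil => rfl
  | cons a l ih => simp only [List.cons_append, DL]; rw [ih]

lemma Df_DL {d : ℕ} (l : List (E d)) (a : E d) (φ : E d → ℝ) : Df a (DL l φ) = DL l (Df a φ) := by
  induction l generalizing φ with
  | nil => rfl
  | cons b l ih =>
    simp only [DL]; rw [ih]; congr 1; ext z; simp [Df]
    rw [show z + b + a = z + a + b by abel]; ring

/-- unit vector -/
def eb {d : ℕ} (i : Fin d) : E d := Pi.single i 1

def l1 {d : ℕ} (z : E d) : ℕ := ∑ i, (z i).natAbs

lemma l1_le {d : ℕ} (z : E d) : l1 z ≤ d * nn z := by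
  unfold l1
  calc ∑ i, (z i).natAbs ≤ ∑ _i : Fin d, nn z := Finset.sum_le_sum fun i _ => natAbs_le_nn z i
    _ = _ := by simp

lemma nn_le_l1 {d : ℕ} (z : E d) : nn z ≤ l1 z := by
  rw [nn_le_iff]; intro i
  exact Finset.single_le_sum (f := fun i => (z i).natAbs) (fun _ _ => Nat.zero_le _) (Finset.mem_univ i)

lemma l1_step {d : ℕ} (z : E d) (hz : z ≠ 0) : ∃ i z', l1 z' + 1 = l1 z ∧ nn z' ≤ nn z ∧
    (z = z' + eb i ∨ z' = z + eb i) := by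
  obtain ⟨i, hi⟩ : ∃ i, z i ≠ 0 := by
    by_contra h; push Not at h; exact hz (funext h)
  have key : ∀ t : ℤ, t.natAbs + 1 = (z i).natAbs → l1 (Function.update z i t) + 1 = l1 z ∧
      nn (Function.update z i t) ≤ nn z := by
    intro t ht
    constructor
    · unfold l1
      rw [← Finset.add_sum_erase _ _ (Finset.mem_univ i), ← Finset.add_sum_erase (Finset.univ) (fun i => (z i).natAbs) (Finset.mem_univ i)]
      rw [Finset.sum_congr (g := fun j => (z j).natAbs) rfl]
      · simp; omega
      · intro j hj
        rw [Function.update_of_ne (Finset.ne_of_mem_erase hj)]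
    · rw [nn_le_iff]; intro j
      have := natAbs_le_nn z i
      by_cases hj : j = i
      · subst hj; simp; omega
      · rw [Function.update_of_ne hj]; exact natAbs_le_nn z j
  rcases lt_or_gt_of_ne hi with h | h
  · obtain ⟨h1, h2⟩ := key (z i + 1) (by omega)
    refine ⟨i, _, h1, h2, Or.inr ?_⟩
    ext j
    by_cases hj : j = i
    · subst hj; simp [eb]
    · simp [eb, hj]
  · obtain ⟨h1, h2⟩ := key (z i - 1) (by omega)
    refine ⟨i, _, h1, h2, Or.inl ?_⟩
    ext j
    by_cases hj : j = i
    · subst hj; simp [eb]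
    · simp [eb, hj]

lemma path_bound {d : ℕ} (ψ : E d → ℝ) (r : ℕ) (B : ℝ)
    (h : ∀ n, nn n ≤ r → ∀ i, |Df (eb i) ψ n| ≤ B) :
    ∀ m, nn m ≤ r → |ψ m - ψ 0| ≤ l1 m * B := by
  suffices ∀ k m, l1 m = k → nn m ≤ r → |ψ m - ψ 0| ≤ k * B by
    intro m hm; exact this _ m rfl hm
  intro k
  induction k with
  | zero =>
    intro m hm _
    have : m = 0 := by
      ext i
      have := natAbs_le_nn m i
      have := nn_le_l1 m
      simp; omega
    simp [this]
  | succ k ih =>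
    intro m hm hr
    have hm0 : m ≠ 0 := by rintro rfl; simp [l1] at hm
    obtain ⟨i, z', h1, h2, h3⟩ := l1_step m hm0
    have h4 := ih z' (by omega) (by omega)
    have h5 : |ψ m - ψ z'| ≤ B := by
      rcases h3 with h3 | h3
      · have := h z' (by omega) i
        rwa [Df, ← h3] at this
      · have := h m hr i
        rw [Df, ← h3] at this
        rwa [abs_sub_comm]
    have := abs_sub_le (ψ m) (ψ z') (ψ 0)
    push_cast; linarith

lemma little_o {d : ℕ} (ψ : E d → ℝ) (h : ∀ i, ∀ ε > 0, ∃ r : ℕ, ∀ z, r ≤ nn z → |Df (eb i) ψ z| ≤ ε) :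
    ∀ ε > 0, ∃ r : ℕ, ∀ z, r ≤ nn z → |ψ z| ≤ ε * J z := by
  intro ε hε
  set ε' := ε / (2 * (d + 1)) with hε'
  have hε'0 : 0 < ε' := by positivity
  choose r hr using fun i => h i ε' hε'0
  set r₀ := Finset.univ.sup r with hr₀
  have hri : ∀ i, r i ≤ r₀ := fun i => Finset.le_sup (Finset.mem_univ i)
  set R0 := d * r₀ + 1 with hR0
  -- bound K on l1 ≤ R0
  set K := ∑ z ∈ box d R0, |ψ z| with hK
  have hK0 : 0 ≤ K := Finset.sum_nonneg fun _ _ => abs_nonneg _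
  have main : ∀ k m, l1 m = k → |ψ m| ≤ ε' * k + K := by
    intro k
    induction k with
    | zero =>
      intro m hm
      have : |ψ m| ≤ K := Finset.single_le_sum (f := fun z => |ψ z|) (fun _ _ => abs_nonneg _)
        ((mem_box m).2 (by have := nn_le_l1 m; omega))
      simpa using this
    | succ k ih =>
      intro m hm
      by_cases hmr : l1 m ≤ R0
      · have : |ψ m| ≤ K := Finset.single_le_sum (f := fun z => |ψ z|) (fun _ _ => abs_nonneg _)
          ((mem_box m).2 (by have := nn_le_l1 m; omega))
        have : 0 ≤ ε' * ((k + 1 : ℕ) : ℝ) := by positivity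
        linarith
      · have hm0 : m ≠ 0 := by rintro rfl; simp [l1] at hm
        obtain ⟨i, z', h1, h2, h3⟩ := l1_step m hm0
        have h4 := ih z' (by omega)
        have big : ∀ z : E d, R0 ≤ l1 z → r i ≤ nn z := by
          intro z hz
          by_contra hcon
          have h6 : nn z ≤ r₀ := by have := hri i; omega
          have h7 : d * nn z ≤ d * r₀ := Nat.mul_le_mul_left _ h6
          have := l1_le z
          omega
        have h5 : |ψ m - ψ z'| ≤ ε' := by
          rcases h3 with h3 | h3
          · have := hr i z' (big z' (by omega))
            rwa [Df, ← h3] at this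
          · have := hr i m (big m (by omega))
            rw [Df, ← h3] at this
            rwa [abs_sub_comm]
        have := abs_sub_abs_le_abs_sub (ψ m) (ψ z')
        push_cast; linarith
  obtain ⟨q, hq⟩ := exists_nat_ge (2 * K / ε)
  refine ⟨q, fun z hz => ?_⟩
  have h1 := main _ z rfl
  have h2 : (l1 z : ℝ) ≤ d * nn z := by exact_mod_cast l1_le z
  have h3 : (q : ℝ) ≤ nn z := by exact_mod_cast hz
  have h4 : 2 * K ≤ ε * nn z := by
    rw [div_le_iff₀ hε] at hq; nlinarith
  have h5 : ε' * (d + 1) = ε / 2 := by rw [hε']; field_simp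
  have h6 : ε' * l1 z ≤ ε' * ((d + 1) * nn z) := by
    apply mul_le_mul_of_nonneg_left _ hε'0.le
    have := Nat.cast_nonneg (α := ℝ) (nn z); linarith
  unfold J
  nlinarith

/-- cutoff -/
def eta {d : ℕ} (n : ℕ) (z : E d) : ℝ := max 0 (min 1 (2 - (nn z : ℝ) / ((n : ℝ) + 1)))

lemma eta_nonneg {d : ℕ} (n : ℕ) (z : E d) : 0 ≤ eta n z := le_max_left _ _

lemma eta_le_one {d : ℕ} (n : ℕ) (z : E d) : eta n z ≤ 1 :=
  max_le zero_le_one (min_le_left _ _)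

lemma eta_one {d : ℕ} (n : ℕ) (z : E d) (h : nn z ≤ n + 1) : eta n z = 1 := by
  have h' : (nn z : ℝ) ≤ n + 1 := by exact_mod_cast h
  have : (nn z : ℝ) / ((n : ℝ) + 1) ≤ 1 := by rw [div_le_one (by positivity)]; exact h'
  unfold eta
  rw [min_eq_left (by linarith), max_eq_right zero_le_one]

lemma eta_zero {d : ℕ} (n : ℕ) (z : E d) (h : 2 * (n + 1) ≤ nn z) : eta n z = 0 := by
  have h' : 2 * ((n : ℝ) + 1) ≤ nn z := by exact_mod_cast h
  have : 2 ≤ (nn z : ℝ) / ((n : ℝ) + 1) := by rw [le_div_iff₀ (by positivity)]; exact h'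
  unfold eta
  rw [max_eq_left]
  exact (min_le_right _ _).trans (by linarith)

lemma eta_lip {d : ℕ} (n : ℕ) (z a : E d) : |eta n (z - a) - eta n z| ≤ (nn a : ℝ) / ((n : ℝ) + 1) := by
  unfold eta
  refine (abs_max_sub_max_le_max _ _ _ _).trans ?_
  rw [sub_self, abs_zero]
  refine max_le (by positivity) ?_
  refine (abs_min_sub_min_le_max _ _ _ _).trans ?_
  rw [sub_self, abs_zero]
  refine max_le (by positivity) ?_
  rw [show 2 - (nn (z - a) : ℝ) / ((n : ℝ) + 1) - (2 - (nn z : ℝ) / ((n : ℝ) + 1)) =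
    ((nn z : ℝ) - nn (z - a)) / ((n : ℝ) + 1) by ring, abs_div, abs_of_pos (by positivity : (0 : ℝ) < n + 1)]
  gcongr
  have h1 : (nn (z - a) : ℝ) ≤ nn z + nn a := by exact_mod_cast nn_sub_le z a
  have h2 : (nn z : ℝ) ≤ nn (z - a) + nn a := by
    have := nn_add_le (z - a) a
    rw [sub_add_cancel] at this
    exact_mod_cast this
  rw [abs_le]; constructor <;> linarith

lemma eta_summable {d : ℕ} (n : ℕ) (a : E d) (φ : E d → ℝ) : Summable fun z => eta n (z - a) * φ z := by
  apply summable_of_ne_finset_zero (s := box d (2 * (n + 1) + nn a))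
  intro z hz
  rw [mem_box] at hz
  have := nn_add_le (z - a) a
  rw [sub_add_cancel] at this
  rw [eta_zero, zero_mul]
  omega

lemma div_term {d : ℕ} (hd : 1 ≤ d) (a : E d) (h : E d → ℝ)
    (hh : ∀ ε > 0, ∃ r : ℕ, ∀ z, r ≤ nn z → |h z| ≤ ε * J z ^ (1 - (d : ℝ))) :
    Tendsto (fun n : ℕ => ∑' z, eta n z * (h (z + a) - h z)) atTop (𝓝 0) := by
  have e1 : ∀ n : ℕ, ∑' z, eta n z * (h (z + a) - h z) = ∑' z, (eta n (z - a) - eta n z) * h z := by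
    intro n
    have s1 : Summable fun z => eta n z * h (z + a) := by
      simpa using eta_summable n 0 fun z => h (z + a)
    have s2 : Summable fun z => eta n z * h z := by
      simpa using eta_summable n 0 h
    have s3 := eta_summable n a h
    simp_rw [mul_sub, sub_mul]
    rw [s1.tsum_sub s2, s3.tsum_sub s2]
    congr 1
    rw [← (Equiv.addRight a).tsum_eq (fun z => eta n (z - a) * h z)]
    simp
  simp_rw [e1]
  rw [Metric.tendsto_atTop]
  intro δ hδ
  set κ : ℝ := nn a * 2 ^ (d - 1) * 7 ^ d + 1 with hκ
  have hκ0 : 0 < κ := by positivity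
  obtain ⟨r, hr⟩ := hh (δ / (2 * κ)) (by positivity)
  refine ⟨r + 2 * nn a, fun n hn => ?_⟩
  rw [Real.dist_eq, sub_zero]
  set ε := δ / (2 * κ) with hε
  have hε0 : 0 < ε := by positivity
  have hsupp : ∀ z ∉ box d (3 * (n + 1)), (eta n (z - a) - eta n z) * h z = 0 := by
    intro z hz
    rw [mem_box] at hz
    have := nn_add_le (z - a) a
    rw [sub_add_cancel] at this
    rw [eta_zero n (z - a) (by omega), eta_zero n z (by omega)]; simp
  rw [tsum_eq_sum hsupp]
  have hn1 : (0 : ℝ) < (n : ℝ) + 1 := by positivity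
  have hterm : ∀ z ∈ box d (3 * (n + 1)), |(eta n (z - a) - eta n z) * h z| ≤
      (nn a : ℝ) / ((n : ℝ) + 1) * (ε * (2 ^ (d - 1) * ((n : ℝ) + 1) ^ (1 - (d : ℝ)))) := by
    intro z _
    by_cases hz : nn z + nn a ≤ n + 1
    · have := nn_sub_le z a
      rw [eta_one n (z - a) (by omega), eta_one n z (by omega)]
      simp; positivity
    · rw [abs_mul]
      refine mul_le_mul (eta_lip n z a) ?_ (abs_nonneg _) (by positivity)
      refine (hr z (by omega)).trans (mul_le_mul_of_nonneg_left ?_ hε0.le)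
      have hz' : ((n : ℝ) + 1) / 2 ≤ J z := by
        have : n + 1 ≤ 2 * (nn z + 2) := by omega
        have : (n : ℝ) + 1 ≤ 2 * (nn z + 2) := by exact_mod_cast this
        unfold J; linarith
      have hd' : (1 : ℝ) ≤ d := by exact_mod_cast hd
      have := Real.rpow_le_rpow_of_nonpos (by positivity) hz' (z := 1 - (d : ℝ)) (by linarith)
      refine this.trans (le_of_eq ?_)
      rw [Real.div_rpow hn1.le (by norm_num), mul_comm, div_eq_mul_inv, ← Real.rpow_neg (by norm_num),
        ← Real.rpow_natCast 2]
      congr 2; push_cast [hd]; ring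
  calc |∑ z ∈ box d (3 * (n + 1)), (eta n (z - a) - eta n z) * h z|
      ≤ ∑ z ∈ box d (3 * (n + 1)), |(eta n (z - a) - eta n z) * h z| := Finset.abs_sum_le_sum_abs _ _
    _ ≤ ∑ z ∈ box d (3 * (n + 1)), (nn a : ℝ) / ((n : ℝ) + 1) * (ε * (2 ^ (d - 1) * ((n : ℝ) + 1) ^ (1 - (d : ℝ)))) :=
        Finset.sum_le_sum hterm
    _ = (2 * (3 * ((n : ℝ) + 1)) + 1) ^ d * ((nn a : ℝ) / ((n : ℝ) + 1) * (ε * (2 ^ (d - 1) * ((n : ℝ) + 1) ^ (1 - (d : ℝ))))) := by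
        rw [Finset.sum_const, card_box, nsmul_eq_mul]; push_cast; ring
    _ ≤ (7 * ((n : ℝ) + 1)) ^ d * ((nn a : ℝ) / ((n : ℝ) + 1) * (ε * (2 ^ (d - 1) * ((n : ℝ) + 1) ^ (1 - (d : ℝ))))) := by
        refine mul_le_mul_of_nonneg_right (pow_le_pow_left₀ (by positivity) ?_ _) (by positivity)
        have := Nat.cast_nonneg (α := ℝ) n; linarith
    _ = nn a * 2 ^ (d - 1) * 7 ^ d * ε := by
        have : ((n : ℝ) + 1) ^ (1 - (d : ℝ)) = ((n : ℝ) + 1) / ((n : ℝ) + 1) ^ d := by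
          rw [Real.rpow_sub hn1, Real.rpow_one, Real.rpow_natCast]
        rw [this, mul_pow]; field_simp
    _ < δ := by
        have : κ * ε = δ / 2 := by rw [hε]; field_simp
        nlinarith

lemma div_zero' {d : ℕ} (hd : 1 ≤ d) {ι : Type*} [Fintype ι] (σ : ι → E d) (h : ι → E d → ℝ)
    (hh : ∀ i, ∀ ε > 0, ∃ r : ℕ, ∀ z, r ≤ nn z → |h i z| ≤ ε * J z ^ (1 - (d : ℝ))) (S : ℝ)
    (hS : HasSum (fun z => ∑ i, (h i (z + σ i) - h i z)) S) : S = 0 := by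
  set F : E d → ℝ := fun z => ∑ i, (h i (z + σ i) - h i z) with hF
  have t1 : Tendsto (fun n : ℕ => ∑' z, eta n z * F z) atTop (𝓝 S) := by
    rw [← hS.tsum_eq]
    refine tendsto_tsum_of_dominated_convergence (bound := fun z => |F z|) hS.summable.abs ?_ ?_
    · intro z
      refine tendsto_const_nhds.congr' ?_
      filter_upwards [eventually_ge_atTop (nn z)] with n hn
      rw [eta_one n z (by omega), one_mul]
    · refine Filter.Eventually.of_forall fun n z => ?_
      rw [Real.norm_eq_abs, abs_mul, abs_of_nonneg (eta_nonneg n z)]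
      exact mul_le_of_le_one_left (abs_nonneg _) (eta_le_one n z)
  have t2 : Tendsto (fun n : ℕ => ∑' z, eta n z * F z) atTop (𝓝 0) := by
    have : (fun n : ℕ => ∑' z, eta n z * F z) =
        fun n : ℕ => ∑ i, ∑' z, eta n z * (h i (z + σ i) - h i z) := by
      funext n
      rw [← Summable.tsum_finsetSum]
      · simp_rw [hF, Finset.mul_sum]
      · intro i _
        simpa using eta_summable n 0 fun z => h i (z + σ i) - h i z
    rw [this]
    simpa using tendsto_finset_sum Finset.univ fun i _ => div_term hd (σ i) (h i) (hh i)
  exact tendsto_nhds_unique t1 t2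

def mono {d i : ℕ} (js : Fin i → Fin d) : E d → ℝ := fun z => ∏ t, (z (js t) : ℝ)

/-- Polynomials of degree `< q`. -/
def Pq (d q : ℕ) : Submodule ℝ (E d → ℝ) :=
  Submodule.span ℝ {w | ∃ i, i < q ∧ ∃ js : Fin i → Fin d, w = mono js}

lemma mono_mem {d i q : ℕ} (h : i < q) (js : Fin i → Fin d) : mono js ∈ Pq d q :=
  Submodule.subset_span ⟨i, h, js, rfl⟩

lemma Pq_le {d q q' : ℕ} (h : q ≤ q') : Pq d q ≤ Pq d q' :=
  Submodule.span_mono fun _ ⟨i, hi, js, e⟩ => ⟨i, by omega, js, e⟩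

lemma one_mem_Pq {d q : ℕ} : (fun _ => 1 : E d → ℝ) ∈ Pq d (q + 1) := by
  have := mono_mem (d := d) (q := q + 1) (Nat.succ_pos q) (Fin.elim0)
  convert this using 1
  ext z; simp [mono]

lemma mono_cons {d i : ℕ} (k : Fin d) (js : Fin i → Fin d) (z : E d) :
    mono (Fin.cons k js : Fin (i + 1) → Fin d) z = (z k : ℝ) * mono js z := by
  simp [mono, Fin.prod_univ_succ]

lemma coord_mul_mem {d q : ℕ} (k : Fin d) (w : E d → ℝ) (hw : w ∈ Pq d q) :
    (fun z => (z k : ℝ) * w z) ∈ Pq d (q + 1) := by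
  induction hw using Submodule.span_induction with
  | mem x h =>
    obtain ⟨i, hi, js, rfl⟩ := h
    convert mono_mem (q := q + 1) (Nat.succ_lt_succ hi) (Fin.cons k js) using 1
    ext z; rw [mono_cons]
  | zero => convert (Pq d (q + 1)).zero_mem using 1; ext z; simp
  | add x y _ _ hx hy =>
    convert (Pq d (q + 1)).add_mem hx hy using 1
    ext z; simp [mul_add]
  | smul c x _ hx =>
    convert (Pq d (q + 1)).smul_mem c hx using 1
    ext z; simp; ring

lemma lin_mul_mem {d q : ℕ} (k : Fin d) (t : ℝ) (w : E d → ℝ) (hw : w ∈ Pq d q) :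
    (fun z => ((z k : ℝ) + t) * w z) ∈ Pq d (q + 1) := by
  convert (Pq d (q + 1)).add_mem (coord_mul_mem k w hw)
    ((Pq d (q + 1)).smul_mem t (Pq_le (Nat.le_succ q) hw)) using 1
  ext z; simp; ring

lemma mono_diff_mem {d : ℕ} (a : E d) : ∀ (i : ℕ) (js : Fin i → Fin d), Df a (mono js) ∈ Pq d i := by
  intro i
  induction i with
  | zero =>
    intro js
    convert (Pq d 0).zero_mem using 1
    ext z; simp [Df, mono]
  | succ i ih =>
    intro js
    have e : js = Fin.cons (js 0) (Fin.tail js) := (Fin.cons_self_tail js).symm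
    rw [e]
    convert (Pq d (i + 1)).add_mem (lin_mul_mem (js 0) ((a (js 0) : ℝ)) _ (ih (Fin.tail js)))
      ((Pq d (i + 1)).smul_mem ((a (js 0) : ℝ)) (mono_mem (Nat.lt_succ_self i) (Fin.tail js))) using 1
    ext z
    simp only [Df, mono_cons, Pi.add_apply, Pi.smul_apply, smul_eq_mul]
    push_cast; ring

lemma Pq_diff {d q : ℕ} (a : E d) (w : E d → ℝ) (hw : w ∈ Pq d (q + 1)) : Df a w ∈ Pq d q := by
  induction hw using Submodule.span_induction with
  | mem x h =>
    obtain ⟨i, hi, js, rfl⟩ := h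
    exact Pq_le (by omega) (mono_diff_mem a i js)
  | zero => convert (Pq d q).zero_mem using 1; ext z; simp [Df]
  | add x y _ _ hx hy =>
    convert (Pq d q).add_mem hx hy using 1
    ext z; simp [Df]; ring
  | smul c x _ hx =>
    convert (Pq d q).smul_mem c hx using 1
    ext z; simp [Df]; ring

lemma abs_coord_le {d : ℕ} (z : E d) (k : Fin d) : |(z k : ℝ)| ≤ J z := by
  have h := natAbs_le_nn z k
  have h' : ((z k).natAbs : ℝ) ≤ nn z := by exact_mod_cast h
  rw [Nat.cast_natAbs, Int.cast_abs] at h'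
  unfold J; linarith

lemma Pq_bound {d q : ℕ} (w : E d → ℝ) (hw : w ∈ Pq d (q + 1)) : ∃ C, 0 ≤ C ∧ ∀ z, |w z| ≤ C * J z ^ q := by
  induction hw using Submodule.span_induction with
  | mem x h =>
    obtain ⟨i, hi, js, rfl⟩ := h
    refine ⟨1, zero_le_one, fun z => ?_⟩
    rw [one_mul, mono, Finset.abs_prod]
    calc ∏ t, |(z (js t) : ℝ)| ≤ ∏ _t : Fin i, J z :=
          Finset.prod_le_prod (fun _ _ => abs_nonneg _) fun t _ => abs_coord_le z _
      _ = J z ^ i := by simp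
      _ ≤ J z ^ q := pow_le_pow_right₀ (by linarith [J_two z]) (by omega)
  | zero => exact ⟨0, le_rfl, fun z => by simp⟩
  | add x y _ _ hx hy =>
    obtain ⟨A, hA, hx⟩ := hx
    obtain ⟨B, hB, hy⟩ := hy
    refine ⟨A + B, by positivity, fun z => ?_⟩
    have := abs_add_le (x z) (y z)
    have := hx z; have := hy z
    simp only [Pi.add_apply]; linarith
  | smul c x _ hx =>
    obtain ⟨A, hA, hx⟩ := hx
    refine ⟨|c| * A, by positivity, fun z => ?_⟩
    simp only [Pi.smul_apply, smul_eq_mul, abs_mul, mul_assoc]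
    exact mul_le_mul_of_nonneg_left (hx z) (abs_nonneg _)

/-- binomial polynomials -/
def Q (n : ℕ) (k : ℤ) : ℝ := (∏ t ∈ Finset.range n, ((k : ℝ) - t)) / n.factorial

lemma Q_zero (k : ℤ) : Q 0 k = 1 := by simp [Q]

lemma Q_at_zero (n : ℕ) : Q (n + 1) 0 = 0 := by
  simp [Q, Finset.prod_range_succ']

lemma Q_diff (n : ℕ) (k : ℤ) : Q (n + 1) (k + 1) - Q (n + 1) k = Q n k := by
  unfold Q
  rw [Finset.prod_range_succ', Finset.prod_range_succ, Nat.factorial_succ]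
  have e : ∏ t ∈ Finset.range n, (((k + 1 : ℤ) : ℝ) - ((t + 1 : ℕ) : ℝ)) = ∏ t ∈ Finset.range n, ((k : ℝ) - t) := by
    refine Finset.prod_congr rfl fun t _ => ?_
    push_cast; ring
  rw [e]
  have := Nat.factorial_ne_zero n
  push_cast
  field_simp
  ring

lemma Q_bound {d : ℕ} (n : ℕ) (z : E d) (i : Fin d) : |Q n (z i)| ≤ ((n : ℝ) + 1) ^ n * J z ^ n := by
  unfold Q
  rw [abs_div, Finset.abs_prod, Nat.abs_cast]
  have h1 : (1 : ℝ) ≤ n.factorial := by exact_mod_cast Nat.factorial_pos n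
  refine (div_le_self (Finset.prod_nonneg fun _ _ => abs_nonneg _) h1).trans ?_
  rw [← mul_pow]
  calc ∏ t ∈ Finset.range n, |((z i : ℝ) - t)| ≤ ∏ _t ∈ Finset.range n, (((n : ℝ) + 1) * J z) := by
        refine Finset.prod_le_prod (fun _ _ => abs_nonneg _) fun t ht => ?_
        have h2 : (t : ℝ) ≤ n := by exact_mod_cast (Finset.mem_range.1 ht).le
        have h3 := abs_coord_le z i
        have h4 := abs_sub (z i : ℝ) (t : ℝ)
        rw [Nat.abs_cast] at h4
        have h5 := J_two z
        have h6 := Nat.cast_nonneg (α := ℝ) n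
        nlinarith
    _ = _ := by simp

lemma Q_mul_mem {d : ℕ} (i : Fin d) (n : ℕ) : ∀ (q : ℕ) (w : E d → ℝ), w ∈ Pq d q →
    (fun z => Q n (z i) * w z) ∈ Pq d (q + n) := by
  induction n with
  | zero => intro q w hw; simpa [Q_zero] using hw
  | succ n ih =>
    intro q w hw
    have h := (Pq d (q + 1 + n)).smul_mem (((n : ℝ) + 1)⁻¹) (ih (q + 1) _ (lin_mul_mem i (-(n : ℝ)) w hw))
    rw [show q + (n + 1) = q + 1 + n by omega]
    convert h using 1
    ext z
    simp only [Q, Finset.prod_range_succ, Nat.factorial_succ, Pi.smul_apply, smul_eq_mul]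
    have := Nat.factorial_ne_zero n
    push_cast
    field_simp
    ring

lemma prodQ_mem {d : ℕ} (β : Fin d → ℕ) (s : Finset (Fin d)) :
    (fun z : E d => ∏ i ∈ s, Q (β i) (z i)) ∈ Pq d (∑ i ∈ s, β i + 1) := by
  classical
  induction s using Finset.induction_on with
  | empty => simpa using one_mem_Pq (d := d) (q := 0)
  | insert a s ha ih =>
    have := Q_mul_mem a (β a) _ _ ih
    rw [Finset.sum_insert ha]
    simp_rw [Finset.prod_insert ha]
    rwa [show β a + ∑ i ∈ s, β i + 1 = ∑ i ∈ s, β i + 1 + β a by omega]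

/-- multi-indices of order `< q` -/
def MI (d q : ℕ) : Finset (Fin d → ℕ) :=
  (Fintype.piFinset fun _ => Finset.range q).filter fun β => ∑ i, β i < q

lemma mem_MI {d q : ℕ} (β : Fin d → ℕ) : β ∈ MI d q ↔ ∑ i, β i < q := by
  rw [MI, Finset.mem_filter, Fintype.mem_piFinset, and_iff_right_iff_imp]
  intro h i
  rw [Finset.mem_range]
  exact lt_of_le_of_lt (Finset.single_le_sum (f := β) (fun _ _ => Nat.zero_le _) (Finset.mem_univ i)) h

def ms {d : ℕ} (β : Fin d → ℕ) : Multiset (E d) := ∑ i, Multiset.replicate (β i) (eb i)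

lemma ms_add {d : ℕ} (β : Fin d → ℕ) (k : Fin d) : ms (β + Pi.single k 1) = eb k ::ₘ ms β := by
  classical
  unfold ms
  simp only [Pi.add_apply, Multiset.replicate_add, Finset.sum_add_distrib]
  rw [Finset.sum_eq_single (a := k) (f := fun i => Multiset.replicate ((Pi.single k 1 : Fin d → ℕ) i) (eb i))]
  · simp [add_comm, ← Multiset.singleton_add]
  · intro b _ hb; simp [hb]
  · simp

lemma ms_card {d : ℕ} (β : Fin d → ℕ) : (ms β).card = ∑ i, β i := by
  simp [ms]

lemma ms_mem {d : ℕ} (β : Fin d → ℕ) (a : E d) (h : a ∈ ms β) : ∃ i, a = eb i := by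
  unfold ms at h
  rw [Multiset.mem_sum] at h
  obtain ⟨i, _, h⟩ := h
  exact ⟨i, Multiset.eq_of_mem_replicate h⟩

def ml {d : ℕ} (β : Fin d → ℕ) : List (E d) := (ms β).toList

lemma DL_perm {d : ℕ} {l l' : List (E d)} (h : l.Perm l') (φ : E d → ℝ) : DL l φ = DL l' φ := by
  induction h generalizing φ with
  | nil => rfl
  | cons a _ ih => simp only [DL]; rw [ih]
  | swap a b l =>
    simp only [DL]
    congr 1
    ext z; simp only [Df]
    rw [show z + a + b = z + b + a by abel]; ring
  | trans _ _ ih1 ih2 => rw [ih1, ih2]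

lemma DL_ml_add {d : ℕ} (β : Fin d → ℕ) (k : Fin d) (φ : E d → ℝ) :
    DL (ml (β + Pi.single k 1)) φ = DL (ml β) (Df (eb k) φ) := by
  have : (ml (β + Pi.single k 1)).Perm (eb k :: ml β) := by
    rw [← Multiset.coe_eq_coe, ← Multiset.cons_coe]
    simp [ml, ms_add]
  rw [DL_perm this]; rfl

/-- discrete Taylor polynomial -/
def Tay {d : ℕ} (q : ℕ) (φ : E d → ℝ) : E d → ℝ :=
  fun m => ∑ β ∈ MI d q, DL (ml β) φ 0 * ∏ i, Q (β i) (m i)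

lemma Tay_mem {d : ℕ} (q : ℕ) (φ : E d → ℝ) : Tay q φ ∈ Pq d q := by
  have : Tay q φ = ∑ β ∈ MI d q, (DL (ml β) φ 0) • (fun m : E d => ∏ i, Q (β i) (m i)) := by
    ext m; simp [Tay, Finset.sum_apply]
  rw [this]
  refine Submodule.sum_mem _ fun β hβ => Submodule.smul_mem _ _ ?_
  rw [mem_MI] at hβ
  exact Pq_le (by omega) (prodQ_mem β Finset.univ)

lemma prodQ_diff {d : ℕ} (β : Fin d → ℕ) (k : Fin d) (m : E d) :
    ∏ i, Q ((β + Pi.single k 1 : Fin d → ℕ) i) ((m + eb k) i) - ∏ i, Q ((β + Pi.single k 1 : Fin d → ℕ) i) (m i) =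
      ∏ i, Q (β i) (m i) := by
  classical
  have e1 := Finset.mul_prod_erase Finset.univ (fun i => Q ((β + Pi.single k 1 : Fin d → ℕ) i) ((m + eb k) i)) (Finset.mem_univ k)
  have e2 := Finset.mul_prod_erase Finset.univ (fun i => Q ((β + Pi.single k 1 : Fin d → ℕ) i) (m i)) (Finset.mem_univ k)
  have e3 := Finset.mul_prod_erase Finset.univ (fun i => Q (β i) (m i)) (Finset.mem_univ k)
  rw [← e1, ← e2, ← e3]
  have h1 : ∏ i ∈ Finset.univ.erase k, Q ((β + Pi.single k 1 : Fin d → ℕ) i) ((m + eb k) i) = ∏ i ∈ Finset.univ.erase k, Q (β i) (m i) := by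
    refine Finset.prod_congr rfl fun i hi => ?_
    simp [eb, Finset.ne_of_mem_erase hi]
  have h2 : ∏ i ∈ Finset.univ.erase k, Q ((β + Pi.single k 1 : Fin d → ℕ) i) (m i) = ∏ i ∈ Finset.univ.erase k, Q (β i) (m i) := by
    refine Finset.prod_congr rfl fun i hi => ?_
    simp [Finset.ne_of_mem_erase hi]
  rw [h1, h2, ← sub_mul]
  congr 1
  simp [eb, Q_diff]

lemma prodQ_diff_zero {d : ℕ} (β : Fin d → ℕ) (k : Fin d) (hk : β k = 0) (m : E d) :
    ∏ i, Q (β i) ((m + eb k) i) = ∏ i, Q (β i) (m i) := by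
  refine Finset.prod_congr rfl fun i _ => ?_
  by_cases hi : i = k
  · subst hi; simp [hk, Q_zero]
  · simp [eb, hi]

lemma Tay_diff {d : ℕ} (q : ℕ) (φ : E d → ℝ) (k : Fin d) :
    Df (eb k) (Tay (q + 1) φ) = Tay q (Df (eb k) φ) := by
  classical
  ext m
  simp only [Df, Tay]
  rw [← Finset.sum_sub_distrib]
  symm
  refine Finset.sum_of_injOn (fun β => β + Pi.single k 1) ?_ ?_ ?_ ?_
  · intro a _ b _ h; exact add_right_cancel h
  · intro β hβ
    simp only [Finset.mem_coe, mem_MI] at *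
    simp only [Pi.add_apply, Finset.sum_add_distrib]
    simp; omega
  · intro β hβ hn
    have hk : β k = 0 := by
      by_contra hk
      apply hn
      refine ⟨β - Pi.single k 1, ?_, ?_⟩
      · have e : β = (β - Pi.single k 1) + Pi.single k 1 := by
          ext i
          by_cases hi : i = k
          · subst hi; simp; omega
          · simp [hi]
        rw [mem_MI, e] at hβ
        simp only [Pi.add_apply, Finset.sum_add_distrib] at hβ
        simp only [Finset.mem_coe, mem_MI]
        simp at hβ ⊢; omega
      · ext i
        by_cases hi : i = k
        · subst hi; simp; omega
        · simp [hi]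
    rw [prodQ_diff_zero β k hk, sub_self]
  · intro β _
    rw [← mul_sub, prodQ_diff, DL_ml_add]

lemma Tay_zero {d : ℕ} (q : ℕ) (φ : E d → ℝ) : Tay (q + 1) φ 0 = φ 0 := by
  unfold Tay
  rw [Finset.sum_eq_single 0]
  · simp [Q_zero, ml, ms, DL]
  · intro β _ hβ
    obtain ⟨i, hi⟩ : ∃ i, β i ≠ 0 := by
      by_contra h; push Not at h; exact hβ (funext h)
    rw [Finset.prod_eq_zero (Finset.mem_univ i), mul_zero]
    obtain ⟨n, hn⟩ := Nat.exists_eq_succ_of_ne_zero hi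
    rw [hn]; exact Q_at_zero n
  · intro h; exact absurd ((mem_MI _).2 (by simp)) h

lemma Tay_rem {d : ℕ} : ∀ (q : ℕ) (φ : E d → ℝ) (r : ℕ) (B : ℝ),
    (∀ l : List (E d), (∀ a ∈ l, ∃ i, a = eb i) → l.length = q → ∀ n, nn n ≤ r → |DL l φ n| ≤ B) →
    ∀ m, nn m ≤ r → |φ m - Tay q φ m| ≤ B * ((d : ℝ) * nn m) ^ q := by
  intro q
  induction q with
  | zero =>
    intro φ r B h m hm
    have := h [] (by simp) rfl m hm
    simpa [Tay, MI, DL] using this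
  | succ q ih =>
    intro φ r B h m hm
    have hB : 0 ≤ B ∨ nn m = 0 := by
      rcases Nat.eq_zero_or_pos d with rfl | hd
      · right; have : nn m ≤ 0 := by rw [nn_le_iff]; intro i; exact i.elim0
        omega
      · left
        refine (abs_nonneg _).trans (h (List.replicate (q + 1) (eb ⟨0, hd⟩)) ?_ (by simp) 0 (by simp [nn_zero]))
        intro a ha; exact ⟨_, List.eq_of_mem_replicate ha⟩
    have hd1 : ∀ k n, Df (eb k) (fun m => φ m - Tay (q + 1) φ m) n =
        Df (eb k) φ n - Tay q (Df (eb k) φ) n := by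
      intro k n
      rw [← Tay_diff]; simp only [Df]; ring
    rcases hB with hB | hm0
    · have hp := path_bound (fun m => φ m - Tay (q + 1) φ m) (nn m) (B * ((d : ℝ) * nn m) ^ q) ?_ m le_rfl
      · rw [Tay_zero, sub_self, sub_zero] at hp
        refine hp.trans ?_
        have h2 : (l1 m : ℝ) ≤ d * nn m := by exact_mod_cast l1_le m
        calc (l1 m : ℝ) * (B * ((d : ℝ) * nn m) ^ q) ≤ (d * nn m) * (B * ((d : ℝ) * nn m) ^ q) :=
              mul_le_mul_of_nonneg_right h2 (by positivity)
          _ = _ := by ring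
      · intro n hn k
        rw [hd1]
        refine (ih (Df (eb k) φ) r B ?_ n (hn.trans hm)).trans ?_
        · intro l hl hlen n hn
          refine h (eb k :: l) ?_ (by simp [hlen]) n hn
          intro a ha
          rcases List.mem_cons.1 ha with rfl | ha
          · exact ⟨k, rfl⟩
          · exact hl a ha
        · have : (nn n : ℝ) ≤ nn m := by exact_mod_cast hn
          gcongr
    · have : m = 0 := by
        ext i; have := natAbs_le_nn m i; simp; omega
      subst this
      rw [Tay_zero]; simp [nn_zero]

lemma Tay_bound {d : ℕ} (q : ℕ) : ∃ C, 0 ≤ C ∧ ∀ (φ : E d → ℝ) (M s : ℝ), 0 ≤ M → 0 < s →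
    (∀ l : List (E d), (∀ a ∈ l, ∃ i, a = eb i) → l.length ≤ q → |DL l φ 0| ≤ M * (s ^ l.length)⁻¹) →
    ∀ m, s ≤ 2 * J m → |Tay (q + 1) φ m| ≤ C * (M * (J m / s) ^ q) := by
  refine ⟨∑ β ∈ MI d (q + 1), (∏ i, ((β i : ℝ) + 1) ^ (β i)) * 2 ^ q, by positivity, ?_⟩
  intro φ M s hM hs h m hm
  rw [Finset.sum_mul]
  refine (Finset.abs_sum_le_sum_abs _ _).trans (Finset.sum_le_sum fun β hβ => ?_)
  rw [mem_MI] at hβ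
  have hJ := J_pos m
  rw [abs_mul, Finset.abs_prod]
  have h1 : |DL (ml β) φ 0| ≤ M * (s ^ (∑ i, β i))⁻¹ := by
    have := h (ml β) (fun a ha => ms_mem β a (by simpa [ml] using ha)) (by simp [ml, ms_card]; omega)
    simpa [ml, ms_card] using this
  have h2 : ∏ i, |Q (β i) (m i)| ≤ (∏ i, ((β i : ℝ) + 1) ^ (β i)) * J m ^ (∑ i, β i) := by
    rw [← Finset.prod_pow_eq_pow_sum, ← Finset.prod_mul_distrib]
    exact Finset.prod_le_prod (fun _ _ => abs_nonneg _) fun i _ => Q_bound _ _ _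
  have h3 : (s ^ (∑ i, β i))⁻¹ * J m ^ (∑ i, β i) ≤ 2 ^ q * (J m / s) ^ q := by
    rw [← mul_pow, mul_comm, ← div_eq_mul_inv, ← div_pow]
    have h4 : 1 ≤ 2 * (J m / s) := by
      rw [← mul_div_assoc, le_div_iff₀ hs]; linarith
    have h5 : 0 ≤ J m / s := by positivity
    exact (pow_le_pow_left₀ h5 (by linarith) _).trans (pow_le_pow_right₀ h4 (by omega))
  set P := ∏ i, ((β i : ℝ) + 1) ^ (β i) with hP
  have hP0 : 0 ≤ P := by positivity
  calc _ ≤ (M * (s ^ (∑ i, β i))⁻¹) * (P * J m ^ (∑ i, β i)) :=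
        mul_le_mul h1 h2 (Finset.prod_nonneg fun _ _ => abs_nonneg _) (by positivity)
    _ = (P * M) * ((s ^ (∑ i, β i))⁻¹ * J m ^ (∑ i, β i)) := by ring
    _ ≤ (P * M) * (2 ^ q * (J m / s) ^ q) := mul_le_mul_of_nonneg_left h3 (by positivity)
    _ = _ := by ring

/-- Decay class `O(J^e log^α)`. -/
def BD {d : ℕ} (e : ℝ) (α : ℕ) (ψ : E d → ℝ) : Prop :=
  ∃ C : ℝ, 0 ≤ C ∧ ∀ z, |ψ z| ≤ C * (J z ^ e * Real.log (J z) ^ α)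

/-- Class `o(J^e)`. -/
def LO {d : ℕ} (e : ℝ) (ψ : E d → ℝ) : Prop :=
  ∀ ε > 0, ∃ r : ℕ, ∀ z, r ≤ nn z → |ψ z| ≤ ε * J z ^ e

lemma JL_nonneg {d : ℕ} (e : ℝ) (α : ℕ) (z : E d) : 0 ≤ J z ^ e * Real.log (J z) ^ α :=
  mul_nonneg (Real.rpow_nonneg (J_pos z).le _) (pow_nonneg (log_J_nonneg z) _)

/-- Predicates closed under linear operations and translations. -/
structure Cl {d : ℕ} (P : (E d → ℝ) → Prop) : Prop where
  zero : P 0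
  add : ∀ φ ψ, P φ → P ψ → P (φ + ψ)
  smul : ∀ (c : ℝ) φ, P φ → P (c • φ)
  shift : ∀ a φ, P φ → P (fun z => φ (z + a))

lemma BD_cl {d : ℕ} (e : ℝ) (α : ℕ) : Cl (BD (d := d) e α) where
  zero := ⟨0, le_rfl, fun z => by simp⟩
  add := by
    rintro φ ψ ⟨A, hA, h1⟩ ⟨B, hB, h2⟩
    refine ⟨A + B, by positivity, fun z => (abs_add_le _ _).trans ?_⟩
    rw [add_mul]; exact add_le_add (h1 z) (h2 z)
  smul := by
    rintro c φ ⟨A, hA, h1⟩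
    refine ⟨|c| * A, by positivity, fun z => ?_⟩
    simp only [Pi.smul_apply, smul_eq_mul, abs_mul, mul_assoc]
    exact mul_le_mul_of_nonneg_left (by simpa [mul_assoc] using h1 z) (abs_nonneg _)
  shift := by
    rintro a φ ⟨A, hA, h1⟩
    have hl : 0 ≤ 1 + 2 * Real.log (J a) := by linarith [log_J_nonneg a]
    refine ⟨A * (J a ^ |e| * (1 + 2 * Real.log (J a)) ^ α), ?_, fun z => (h1 _).trans ?_⟩
    · have := Real.rpow_nonneg (J_pos a).le |e|
      positivity
    · rw [mul_assoc]
      refine mul_le_mul_of_nonneg_left ?_ hA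
      have h2 : Real.log (J (z + a)) ≤ (1 + 2 * Real.log (J a)) * Real.log (J z) :=
        log_comp (J_pos _) (J_two z) (by linarith [J_two a]) (by rw [mul_comm]; exact J_add_le z a)
      calc _ ≤ (J a ^ |e| * J z ^ e) * ((1 + 2 * Real.log (J a)) * Real.log (J z)) ^ α :=
            mul_le_mul (J_shift z a e) (pow_le_pow_left₀ (log_J_nonneg _) h2 _) (pow_nonneg (log_J_nonneg _) _)
              (mul_nonneg (Real.rpow_nonneg (J_pos a).le _) (Real.rpow_nonneg (J_pos z).le _))
        _ = _ := by rw [mul_pow]; ring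

lemma LO_cl {d : ℕ} (e : ℝ) : Cl (LO (d := d) e) where
  zero := fun ε hε => ⟨0, fun z _ => by simpa using mul_nonneg hε.le (Real.rpow_nonneg (J_pos z).le _)⟩
  add := by
    intro φ ψ h1 h2 ε hε
    obtain ⟨r, hr⟩ := h1 (ε / 2) (by positivity)
    obtain ⟨s, hs⟩ := h2 (ε / 2) (by positivity)
    refine ⟨max r s, fun z hz => (abs_add_le _ _).trans ?_⟩
    have := hr z (by omega); have := hs z (by omega)
    linarith
  smul := by
    intro c φ h1 ε hε
    obtain ⟨r, hr⟩ := h1 (ε / (|c| + 1)) (by positivity)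
    refine ⟨r, fun z hz => ?_⟩
    have h0 := hr z hz
    have hJ := Real.rpow_nonneg (J_pos z).le e
    simp only [Pi.smul_apply, smul_eq_mul, abs_mul]
    calc |c| * |φ z| ≤ (|c| + 1) * (ε / (|c| + 1) * J z ^ e) :=
          mul_le_mul (by linarith) h0 (abs_nonneg _) (by positivity)
      _ = _ := by field_simp
  shift := by
    intro a φ h1 ε hε
    have hJa := Real.rpow_pos_of_pos (J_pos a) |e|
    obtain ⟨r, hr⟩ := h1 (ε / J a ^ |e|) (by positivity)
    refine ⟨r + nn a, fun z hz => ?_⟩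
    have h2 : r ≤ nn (z + a) := by
      have := nn_sub_le (z + a) a
      rw [add_sub_cancel_right] at this
      omega
    refine (hr _ h2).trans ?_
    calc _ ≤ ε / J a ^ |e| * (J a ^ |e| * J z ^ e) :=
          mul_le_mul_of_nonneg_left (J_shift z a e) (by positivity)
      _ = _ := by field_simp

lemma Cl.neg {d : ℕ} {P : (E d → ℝ) → Prop} (h : Cl P) {φ : E d → ℝ} (hφ : P φ) : P (-φ) := by
  have := h.smul (-1) φ hφ
  simpa using this

lemma Cl.sub {d : ℕ} {P : (E d → ℝ) → Prop} (h : Cl P) {φ ψ : E d → ℝ} (hφ : P φ) (hψ : P ψ) :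
    P (φ - ψ) := by
  rw [sub_eq_add_neg]; exact h.add _ _ hφ (h.neg hψ)

lemma Cl.sum {d : ℕ} {P : (E d → ℝ) → Prop} (h : Cl P) {ι : Type*} (s : Finset ι) (φ : ι → E d → ℝ)
    (hφ : ∀ i ∈ s, P (φ i)) : P (∑ i ∈ s, φ i) :=
  Finset.sum_induction _ P h.add h.zero hφ

lemma Cl.sum' {d : ℕ} {P : (E d → ℝ) → Prop} (h : Cl P) {ι : Type*} (s : Finset ι) (φ : ι → E d → ℝ)
    (hφ : ∀ i ∈ s, P (φ i)) : P (fun z => ∑ i ∈ s, φ i z) := by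
  have := h.sum s φ hφ
  convert this using 1
  ext z; simp

lemma Cl.df {d : ℕ} {P : (E d → ℝ) → Prop} (h : Cl P) (a : E d) {φ : E d → ℝ} (hφ : P φ) : P (Df a φ) :=
  h.sub (h.shift a φ hφ) hφ

lemma DL_zero {d : ℕ} (l : List (E d)) : DL l (0 : E d → ℝ) = 0 := by
  have := DL_smul l 0 (0 : E d → ℝ)
  simpa using this

lemma Cl.dl {d : ℕ} {P : (E d → ℝ) → Prop} (h : Cl P) (l : List (E d)) : Cl (fun φ => P (DL l φ)) where
  zero := by simpa [DL_zero] using h.zero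
  add := fun φ ψ h1 h2 => by rw [DL_add]; exact h.add _ _ h1 h2
  smul := fun c φ h1 => by rw [DL_smul]; exact h.smul _ _ h1
  shift := fun a φ h1 => by rw [DL_shift]; exact h.shift _ _ h1

lemma Cl.gen {d : ℕ} {P : (E d → ℝ) → Prop} (h : Cl P) (S : Set (E d)) (hS : AddSubgroup.closure S = ⊤)
    (φ : E d → ℝ) (hφ : ∀ a ∈ S, P (Df a φ)) (a : E d) : P (Df a φ) := by
  have ha : a ∈ AddSubgroup.closure S := by rw [hS]; trivial
  induction ha using AddSubgroup.closure_induction with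
  | mem x hx => exact hφ x hx
  | zero => convert h.zero using 1; ext z; simp [Df]
  | add x y _ _ hx hy =>
    have := h.add _ _ (h.shift y _ hx) hy
    convert this using 1
    ext z; simp [Df, add_assoc, add_comm x y]
  | neg x _ hx =>
    have := h.neg (h.shift (-x) _ hx)
    convert this using 1
    ext z; simp [Df]

lemma Cl.gen_list {d : ℕ} {P : (E d → ℝ) → Prop} (h : Cl P) (S : Set (E d)) (hS : AddSubgroup.closure S = ⊤) :
    ∀ (n : ℕ) (φ : E d → ℝ), (∀ l : List (E d), (∀ a ∈ l, a ∈ S) → l.length = n → P (DL l φ)) →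
      ∀ l : List (E d), l.length = n → P (DL l φ) := by
  intro n
  induction n with
  | zero =>
    intro φ hφ l hl
    rw [List.length_eq_zero_iff] at hl; subst hl
    exact hφ [] (by simp) rfl
  | succ n ih =>
    intro φ hφ l hl
    obtain ⟨a, l', rfl⟩ := List.exists_cons_of_length_eq_add_one hl
    have := (h.dl l').gen S hS φ ?_ a
    · exact this
    · intro b hb
      refine ih (Df b φ) (fun m hm hm' => ?_) l' (by simpa using hl)
      exact hφ (b :: m) (by simpa using ⟨hb, hm⟩) (by simp [hm'])

lemma BD.mul {d : ℕ} {e e' : ℝ} {α β : ℕ} {φ ψ : E d → ℝ} (h1 : BD e α φ) (h2 : BD e' β ψ) :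
    BD (e + e') (α + β) (fun z => φ z * ψ z) := by
  obtain ⟨A, hA, h1⟩ := h1; obtain ⟨B, hB, h2⟩ := h2
  refine ⟨A * B, by positivity, fun z => ?_⟩
  rw [abs_mul, Real.rpow_add (J_pos z), pow_add]
  have := mul_le_mul (h1 z) (h2 z) (abs_nonneg _) (mul_nonneg hA (JL_nonneg _ _ _))
  refine this.trans (le_of_eq (by ring))

lemma BD.mono {d : ℕ} {e e' : ℝ} {α : ℕ} {φ : E d → ℝ} (h1 : BD e α φ) (h : e ≤ e') : BD e' α φ := by
  obtain ⟨A, hA, h1⟩ := h1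
  refine ⟨A, hA, fun z => (h1 z).trans (mul_le_mul_of_nonneg_left ?_ hA)⟩
  exact mul_le_mul_of_nonneg_right (Real.rpow_le_rpow_of_exponent_le (by linarith [J_two z]) h)
    (pow_nonneg (log_J_nonneg z) _)

lemma BD.lo {d : ℕ} {e e' : ℝ} {α : ℕ} {φ : E d → ℝ} (h1 : BD e α φ) (h : e < e') : LO e' φ := by
  obtain ⟨A, hA, h1⟩ := h1
  intro ε hε
  have hl := isLittleO_log_rpow_rpow_atTop (s := e' - e) α (by linarith)
  have h2 := hl.def (c := ε / (A + 1)) (by positivity)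
  obtain ⟨x, hx⟩ := eventually_atTop.1 h2
  refine ⟨⌈x⌉₊, fun z hz => (h1 z).trans ?_⟩
  have hz' : x ≤ J z := by
    have := Nat.le_ceil x
    have h3 : ((⌈x⌉₊ : ℕ) : ℝ) ≤ nn z := by exact_mod_cast hz
    unfold J; linarith
  have h4 := hx _ hz'
  have hJe := Real.rpow_pos_of_pos (J_pos z) e
  have hJe' := Real.rpow_pos_of_pos (J_pos z) (e' - e)
  rw [Real.norm_of_nonneg hJe'.le, Real.rpow_natCast] at h4
  have h5 := (le_abs_self _).trans h4
  have hJJ : J z ^ e' = J z ^ e * J z ^ (e' - e) := by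
    rw [← Real.rpow_add (J_pos z)]; congr 1; ring
  have hL := pow_nonneg (log_J_nonneg z) α
  calc A * (J z ^ e * Real.log (J z) ^ α) ≤ (A + 1) * (J z ^ e * (ε / (A + 1) * J z ^ (e' - e))) := by
        gcongr; linarith
    _ = _ := by rw [hJJ]; field_simp

lemma LO.mul {d : ℕ} {e e' : ℝ} {φ ψ : E d → ℝ} (h1 : LO e φ) (h2 : BD e' 0 ψ) :
    LO (e + e') (fun z => φ z * ψ z) := by
  obtain ⟨B, hB, h2⟩ := h2
  intro ε hε
  obtain ⟨r, hr⟩ := h1 (ε / (B + 1)) (by positivity)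
  refine ⟨r, fun z hz => ?_⟩
  have ha := hr z hz; have hb := h2 z
  have hJe := Real.rpow_pos_of_pos (J_pos z) e
  have hJe' := Real.rpow_pos_of_pos (J_pos z) e'
  rw [abs_mul, Real.rpow_add (J_pos z)]
  rw [pow_zero, mul_one] at hb
  calc |φ z| * |ψ z| ≤ (ε / (B + 1) * J z ^ e) * ((B + 1) * J z ^ e') := by
        refine mul_le_mul ha (hb.trans ?_) (abs_nonneg _) (by positivity)
        gcongr; linarith
    _ = _ := by field_simp

lemma BD.summable {d : ℕ} (hd : 1 ≤ d) {e : ℝ} {α : ℕ} {φ : E d → ℝ} (h1 : BD e α φ)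
    (h : e ≤ -(d : ℝ) - 1) : Summable φ := by
  obtain ⟨A, hA, h1⟩ := h1.mono h
  have := (summable_J hd α 1 le_rfl).mul_left A
  refine Summable.of_norm_bounded this fun z => ?_
  simpa using h1 z

/-- `f` annihilates polynomials of degree `< q`. -/
def Kill {d : ℕ} (q : ℕ) (f : E d → ℝ) : Prop := ∀ w ∈ Pq d q, HasSum (fun z => f z * w z) 0

lemma kill_of_mono {d : ℕ} (q : ℕ) (f : E d → ℝ)
    (h : ∀ i, i < q → ∀ js : Fin i → Fin d, HasSum (fun z => f z * mono js z) 0) : Kill q f := by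
  intro w hw
  induction hw using Submodule.span_induction with
  | mem x hx => obtain ⟨i, hi, js, rfl⟩ := hx; exact h i hi js
  | zero => simp
  | add x y _ _ hx hy => simpa [mul_add] using hx.add hy
  | smul c x _ hx =>
    have := hx.mul_left c
    rw [mul_zero] at this
    have e : (fun z => f z * (c • x) z) = fun z => c * (f z * x z) := by
      ext z; simp only [Pi.smul_apply, smul_eq_mul]; ring
    rw [e]; exact this

lemma BD_poly {d q : ℕ} (w : E d → ℝ) (hw : w ∈ Pq d (q + 1)) : BD (q : ℝ) 0 w := by
  obtain ⟨C, hC, h⟩ := Pq_bound w hw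
  exact ⟨C, hC, fun z => by simpa using h z⟩

lemma kill_step {d : ℕ} (hd : 1 ≤ d) (q α : ℕ) (f : E d → ℝ) (a : E d) (hf : BD (-(d : ℝ) - q) α f)
    (hf' : BD (-(d : ℝ) - (q + 1 : ℕ)) α (Df a f)) (hk : Kill q f) : Kill (q + 1) (Df a f) := by
  intro w hw
  have hw0 := BD_poly w hw
  have hs1 : Summable fun z => Df a f z * w z := by
    refine (hf'.mul hw0).summable hd ?_
    push_cast; linarith
  have hs2 := hk _ (Pq_diff (-a) w hw)
  set h : E d → ℝ := fun z => f z * w (z - a) with hh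
  have hBh : BD (-(d:ℝ) - q + q) (α + 0) h := by
    refine hf.mul ?_
    have := (BD_cl _ _).shift (-a) _ hw0
    simpa [sub_eq_add_neg] using this
  have hlo : LO (1 - (d : ℝ)) h := hBh.lo (by linarith)
  have hident : ∀ z, Df a f z * w z + f z * (-(Df (-a) w z)) = h (z + a) - h z := by
    intro z; simp only [Df, hh, add_sub_cancel_right, ← sub_eq_add_neg]; ring
  have hS : HasSum (fun z => ∑ _i : Unit, (h (z + a) - h z)) ((∑' z, Df a f z * w z) + -0) := by
    have := hs1.hasSum.add hs2.neg
    convert this using 2 with z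
    simp [← hident]
  have h0 := div_zero' hd (fun _ : Unit => a) (fun _ => h) (fun _ => hlo) _ hS
  have := hs1.hasSum
  rwa [show ∑' z, Df a f z * w z = 0 by linarith] at this

lemma unif1 {d : ℕ} : ∀ (n : ℕ) (γ : E d → ℝ) (b : ℝ), (∀ l : List (E d), BD (-b - (l.length : ℝ)) 0 (DL l γ)) →
    ∃ C, 0 ≤ C ∧ ∀ l : List (E d), (∀ a ∈ l, ∃ i, a = eb i) → l.length = n → ∀ z,
      |DL l γ z| ≤ C * J z ^ (-b - (n : ℝ)) := by
  intro n
  induction n with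
  | zero =>
    intro γ b h
    obtain ⟨C, hC, h⟩ := h []
    refine ⟨C, hC, fun l _ hl z => ?_⟩
    rw [List.length_eq_zero_iff] at hl; subst hl
    simpa using h z
  | succ n ih =>
    intro γ b h
    have : ∀ i : Fin d, ∃ C, 0 ≤ C ∧ ∀ l : List (E d), (∀ a ∈ l, ∃ i, a = eb i) → l.length = n → ∀ z,
      |DL l (Df (eb i) γ) z| ≤ C * J z ^ (-(b + 1) - (n : ℝ)) := by
      intro i
      refine ih _ _ fun l => ?_
      have := h (eb i :: l)
      simp only [List.length_cons, DL] at this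
      convert this using 1
      push_cast; ring
    choose C hC h' using this
    refine ⟨∑ i, C i, Finset.sum_nonneg fun i _ => hC i, fun l hl hlen z => ?_⟩
    obtain ⟨a, l', rfl⟩ := List.exists_cons_of_length_eq_add_one hlen
    obtain ⟨i, rfl⟩ := hl a (by simp)
    have := h' i l' (fun a ha => hl a (by simp [ha])) (by simpa using hlen) z
    rw [show -(b + 1) - (n : ℝ) = -b - ((n + 1 : ℕ) : ℝ) by push_cast; ring] at this
    refine this.trans (mul_le_mul_of_nonneg_right ?_ (Real.rpow_nonneg (J_pos z).le _))
    exact Finset.single_le_sum (f := C) (fun i _ => hC i) (Finset.mem_univ i)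

lemma unif {d : ℕ} (p : ℕ) (γ : E d → ℝ) (b : ℝ) (h : ∀ l : List (E d), BD (-b - (l.length : ℝ)) 0 (DL l γ)) :
    ∃ C, 0 ≤ C ∧ ∀ l : List (E d), (∀ a ∈ l, ∃ i, a = eb i) → l.length ≤ p → ∀ z,
      |DL l γ z| ≤ C * J z ^ (-b - (l.length : ℝ)) := by
  choose C hC h' using fun n => unif1 n γ b h
  refine ⟨∑ n ∈ Finset.range (p + 1), C n, Finset.sum_nonneg fun i _ => hC i, fun l hl hlen z => ?_⟩
  refine (h' l.length l hl rfl z).trans (mul_le_mul_of_nonneg_right ?_ (Real.rpow_nonneg (J_pos z).le _))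
  exact Finset.single_le_sum (f := C) (fun i _ => hC i) (Finset.mem_range.2 (by omega))

lemma rpow_neg_le {x y K s : ℝ} (hy : 0 < y) (hK : 0 < K) (h : y ≤ K * x) (hs : 0 ≤ s) :
    x ^ (-s) ≤ K ^ s * y ^ (-s) := by
  have hx : 0 < x := by
    by_contra hx
    push Not at hx
    have := mul_nonpos_of_nonneg_of_nonpos hK.le hx
    linarith
  have h1 : (K * x) ^ (-s) ≤ y ^ (-s) := Real.rpow_le_rpow_of_nonpos hy h (by linarith)
  rw [Real.mul_rpow hK.le hx.le] at h1
  calc x ^ (-s) = K ^ s * (K ^ (-s) * x ^ (-s)) := by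
        rw [← mul_assoc, ← Real.rpow_add hK]; simp
    _ ≤ _ := by
        have := Real.rpow_nonneg hK.le s
        gcongr

section est
variable {d : ℕ} (ℓ : E d)

lemma half_J : J ℓ ≤ 2 * (((nn ℓ / 2 : ℕ) : ℝ) + 2) := by
  have : nn ℓ ≤ 2 * (nn ℓ / 2) + 1 := by omega
  have h : (nn ℓ : ℝ) ≤ 2 * ((nn ℓ / 2 : ℕ) : ℝ) + 1 := by exact_mod_cast this
  unfold J; linarith

lemma half_J' : ((nn ℓ / 2 : ℕ) : ℝ) + 2 ≤ J ℓ := by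
  have : nn ℓ / 2 ≤ nn ℓ := by omega
  have h : ((nn ℓ / 2 : ℕ) : ℝ) ≤ nn ℓ := by exact_mod_cast this
  unfold J; linarith

lemma logJ_half : 1 / 2 ≤ Real.log (J ℓ) := half_le_log (J_two ℓ)

lemma tail_est (hd : 1 ≤ d) (α : ℕ) (s : ℝ) (hs : 1 ≤ s) : ∃ C, 0 ≤ C ∧ ∀ (ℓ : E d) (T : Finset (E d)),
    (∀ m ∈ T, nn ℓ / 2 ≤ nn m) → ∑ m ∈ T, J m ^ (-(d : ℝ) - s) * Real.log (J m) ^ α ≤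
      C * (J ℓ ^ (-s) * Real.log (J ℓ) ^ (α + 1)) := by
  obtain ⟨C, hC, h⟩ := sum_B2 hd α s hs
  refine ⟨C * (2 ^ s * 2), by positivity, fun ℓ T hT => (h _ T hT).trans ?_⟩
  rw [mul_assoc]
  refine mul_le_mul_of_nonneg_left ?_ hC
  have h1 := rpow_neg_le (J_pos ℓ) two_pos (half_J ℓ) (by linarith : 0 ≤ s)
  have h0 : (0:ℝ) ≤ Real.log (((nn ℓ / 2 : ℕ) : ℝ) + 2) := Real.log_nonneg (by
    have := Nat.cast_nonneg (α := ℝ) (nn ℓ / 2); linarith)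
  have h2 : Real.log (((nn ℓ / 2 : ℕ) : ℝ) + 2) ≤ Real.log (J ℓ) := Real.log_le_log (by positivity) (half_J' ℓ)
  have h3 : Real.log (((nn ℓ / 2 : ℕ) : ℝ) + 2) ^ α ≤ 2 * Real.log (J ℓ) ^ (α + 1) := by
    have a1 := pow_le_pow_left₀ h0 h2 α
    have a2 := logJ_half ℓ
    have a3 := pow_nonneg (log_J_nonneg ℓ) α
    rw [pow_succ]; nlinarith
  calc _ ≤ (2 ^ s * J ℓ ^ (-s)) * (2 * Real.log (J ℓ) ^ (α + 1)) :=
        mul_le_mul h1 h3 (pow_nonneg h0 _) (mul_nonneg (by positivity) (Real.rpow_nonneg (J_pos ℓ).le _))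
    _ = _ := by ring

lemma near_est (hd : 1 ≤ d) (α : ℕ) : ∃ C, 0 ≤ C ∧ ∀ (ℓ : E d) (T : Finset (E d)),
    (∀ m ∈ T, nn m ≤ nn ℓ / 2) → ∑ m ∈ T, J m ^ (-(d : ℝ)) * Real.log (J m) ^ α ≤
      C * Real.log (J ℓ) ^ (α + 1) := by
  obtain ⟨C, hC, h⟩ := sum_B1 hd α
  refine ⟨C, hC, fun ℓ T hT => (h _ T hT).trans ?_⟩
  refine mul_le_mul_of_nonneg_left ?_ hC
  have h0 : (0:ℝ) ≤ Real.log (((nn ℓ / 2 : ℕ) : ℝ) + 2) := Real.log_nonneg (by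
    have := Nat.cast_nonneg (α := ℝ) (nn ℓ / 2); linarith)
  exact pow_le_pow_left₀ h0 (Real.log_le_log (by positivity) (half_J' ℓ)) _

lemma shift_est (hd : 1 ≤ d) (b : ℝ) (hb : b ≤ d) : ∃ C, 0 ≤ C ∧ ∀ (ℓ : E d) (T : Finset (E d)),
    (∀ m ∈ T, nn (m - ℓ) ≤ 2 * nn ℓ) → ∑ m ∈ T, J (m - ℓ) ^ (-b) ≤
      C * (J ℓ ^ ((d : ℝ) - b) * Real.log (J ℓ)) := by
  obtain ⟨C, hC, h⟩ := sum_B1 hd 0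
  have hl3 : 0 ≤ Real.log 2 := Real.log_nonneg (by norm_num)
  refine ⟨2 ^ ((d : ℝ) - b) * (C * (1 + 2 * Real.log 2)), by positivity, fun ℓ T hT => ?_⟩
  have h1 : ∑ m ∈ T, J (m - ℓ) ^ (-(d : ℝ)) ≤ C * ((1 + 2 * Real.log 2) * Real.log (J ℓ)) := by
    have h2 := h (2 * nn ℓ) (T.map (Equiv.subRight ℓ).toEmbedding) (by
      intro m hm
      simp only [Finset.mem_map, Equiv.coe_toEmbedding, Equiv.subRight_apply] at hm
      obtain ⟨k, hk, rfl⟩ := hm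
      exact hT k hk)
    rw [Finset.sum_map] at h2
    simp only [Equiv.coe_toEmbedding, Equiv.subRight_apply, pow_zero, mul_one, zero_add, pow_one] at h2
    refine h2.trans (mul_le_mul_of_nonneg_left ?_ hC)
    refine log_comp (by positivity) (J_two ℓ) (by norm_num) ?_
    unfold J; push_cast; linarith
  have h2 : ∀ m ∈ T, J (m - ℓ) ^ (-b) ≤ (2 ^ ((d : ℝ) - b) * J ℓ ^ ((d : ℝ) - b)) * J (m - ℓ) ^ (-(d : ℝ)) := by
    intro m hm
    have : J (m - ℓ) ≤ 2 * J ℓ := by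
      have : (nn (m - ℓ) : ℝ) ≤ 2 * nn ℓ := by exact_mod_cast hT m hm
      unfold J; linarith
    rw [← Real.mul_rpow (by norm_num) (J_pos ℓ).le]
    calc J (m - ℓ) ^ (-b) = J (m - ℓ) ^ ((d : ℝ) - b) * J (m - ℓ) ^ (-(d : ℝ)) := by
          rw [← Real.rpow_add (J_pos _)]; congr 1; ring
      _ ≤ _ := by
          refine mul_le_mul_of_nonneg_right ?_ (Real.rpow_nonneg (J_pos _).le _)
          exact Real.rpow_le_rpow (J_pos _).le this (by linarith)
  have hJ := Real.rpow_nonneg (J_pos ℓ).le ((d : ℝ) - b)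
  calc _ ≤ ∑ m ∈ T, (2 ^ ((d : ℝ) - b) * J ℓ ^ ((d : ℝ) - b)) * J (m - ℓ) ^ (-(d : ℝ)) := Finset.sum_le_sum h2
    _ = (2 ^ ((d : ℝ) - b) * J ℓ ^ ((d : ℝ) - b)) * ∑ m ∈ T, J (m - ℓ) ^ (-(d : ℝ)) := by rw [Finset.mul_sum]
    _ ≤ (2 ^ ((d : ℝ) - b) * J ℓ ^ ((d : ℝ) - b)) * (C * ((1 + 2 * Real.log 2) * Real.log (J ℓ))) := by gcongr
    _ = _ := by ring

end est

lemma DL_sh {d : ℕ} (γ : E d → ℝ) (ℓ : E d) (l : List (E d)) (n : E d) :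
    DL l (fun m => γ (m - ℓ)) n = DL l γ (n - ℓ) := by
  have := congrFun (DL_shift l (-ℓ) γ) n
  simpa [sub_eq_add_neg] using this

lemma reg1 {d : ℕ} (hd : 1 ≤ d) (p α : ℕ) (b : ℝ) (hb1 : 0 ≤ b) (f γ : E d → ℝ)
    (hf : BD (-(d : ℝ) - p) α f) (hγ : ∀ l : List (E d), BD (-b - (l.length : ℝ)) 0 (DL l γ)) :
    ∃ C, 0 ≤ C ∧ ∀ (ℓ : E d) (T : Finset (E d)), (∀ m ∈ T, nn m ≤ nn ℓ / 2) →
      ∑ m ∈ T, |f m| * |γ (m - ℓ) - Tay p (fun m => γ (m - ℓ)) m| ≤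
        C * (J ℓ ^ (-b - (p : ℝ)) * Real.log (J ℓ) ^ (α + 1)) := by
  obtain ⟨c, hc, hf⟩ := hf
  obtain ⟨g, hg, hγ⟩ := unif1 p γ b hγ
  obtain ⟨S, hS, hsum⟩ := near_est hd α
  refine ⟨c * (g * 2 ^ (b + p)) * (d : ℝ) ^ p * S, by positivity, fun ℓ T hT => ?_⟩
  have hJl := Real.rpow_nonneg (J_pos ℓ).le (-b - (p : ℝ))
  have key : ∀ m ∈ T, |f m| * |γ (m - ℓ) - Tay p (fun m => γ (m - ℓ)) m| ≤
      (c * (g * 2 ^ (b + p)) * (d : ℝ) ^ p * J ℓ ^ (-b - (p : ℝ))) * (J m ^ (-(d : ℝ)) * Real.log (J m) ^ α) := by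
    intro m hm
    have h1 := Tay_rem p (fun m => γ (m - ℓ)) (nn ℓ / 2) (g * (2 ^ (b + p) * J ℓ ^ (-b - (p : ℝ)))) (by
      intro l hl hlen n hn
      rw [DL_sh]
      refine (hγ l hl hlen _).trans (mul_le_mul_of_nonneg_left ?_ hg)
      have := nn_sub_le n (n - ℓ)
      rw [sub_sub_cancel] at this
      have h2 : nn ℓ ≤ 2 * nn (n - ℓ) := by omega
      have h3 : (nn ℓ : ℝ) ≤ 2 * nn (n - ℓ) := by exact_mod_cast h2
      have := rpow_neg_le (x := J (n - ℓ)) (J_pos ℓ) two_pos (by unfold J; linarith) (by positivity : 0 ≤ b + p)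
      rwa [show -(b + (p : ℝ)) = -b - p by ring] at this) m (hT m hm)
    have h2 : ((d : ℝ) * nn m) ^ p ≤ (d : ℝ) ^ p * J m ^ (p : ℝ) := by
      rw [mul_pow, Real.rpow_natCast]
      have : (nn m : ℝ) ≤ J m := by unfold J; linarith
      gcongr
    have h3 : |γ (m - ℓ) - Tay p (fun m => γ (m - ℓ)) m| ≤
        g * (2 ^ (b + p) * J ℓ ^ (-b - (p : ℝ))) * ((d : ℝ) ^ p * J m ^ (p : ℝ)) :=
      h1.trans (mul_le_mul_of_nonneg_left h2 (by positivity))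
    have h4 : J m ^ (-(d : ℝ)) = J m ^ (-(d : ℝ) - p) * J m ^ (p : ℝ) := by
      rw [← Real.rpow_add (J_pos _)]; congr 1; ring
    calc _ ≤ (c * (J m ^ (-(d : ℝ) - p) * Real.log (J m) ^ α)) *
          (g * (2 ^ (b + p) * J ℓ ^ (-b - (p : ℝ))) * ((d : ℝ) ^ p * J m ^ (p : ℝ))) :=
          mul_le_mul (hf m) h3 (abs_nonneg _) (mul_nonneg hc (JL_nonneg _ _ _))
      _ = _ := by rw [h4]; ring
  refine (Finset.sum_le_sum key).trans ?_
  rw [← Finset.mul_sum]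
  refine (mul_le_mul_of_nonneg_left (hsum ℓ T hT) (by positivity)).trans (le_of_eq (by ring))

lemma reg2 {d : ℕ} (hd : 1 ≤ d) (p α : ℕ) (b : ℝ) (f γ : E d → ℝ)
    (hf : BD (-(d : ℝ) - p) α f) (hγ : ∀ l : List (E d), BD (-b - (l.length : ℝ)) 0 (DL l γ)) :
    ∃ C, 0 ≤ C ∧ ∀ (ℓ : E d) (T : Finset (E d)), (∀ m ∈ T, nn ℓ / 2 ≤ nn m) →
      ∑ m ∈ T, |f m| * |Tay p (fun m => γ (m - ℓ)) m| ≤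
        C * (J ℓ ^ (-b - (p : ℝ)) * Real.log (J ℓ) ^ (α + 1)) := by
  rcases p with _ | q
  · refine ⟨0, le_rfl, fun ℓ T hT => ?_⟩
    simp [Tay, MI]
  obtain ⟨c, hc, hf⟩ := hf
  obtain ⟨g, hg, hγ⟩ := unif q γ b hγ
  obtain ⟨S, hS, hsum⟩ := tail_est hd α 1 le_rfl
  obtain ⟨t, ht, htay⟩ := Tay_bound (d := d) q
  refine ⟨c * t * g * S, by positivity, fun ℓ T hT => ?_⟩
  have hJl := Real.rpow_nonneg (J_pos ℓ).le
  have key : ∀ m ∈ T, |f m| * |Tay (q + 1) (fun m => γ (m - ℓ)) m| ≤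
      (c * t * g * J ℓ ^ (-b - (q : ℝ))) * (J m ^ (-(d : ℝ) - 1) * Real.log (J m) ^ α) := by
    intro m hm
    have h1 := htay (fun m => γ (m - ℓ)) (g * J ℓ ^ (-b)) (J ℓ) (mul_nonneg hg (hJl _)) (J_pos ℓ) (by
      intro l hl hlen
      rw [DL_sh, zero_sub]
      refine (hγ l hl hlen _).trans (le_of_eq ?_)
      rw [J_neg, Real.rpow_sub (J_pos ℓ), Real.rpow_natCast]; ring) m (by
        have h1 : (((nn ℓ / 2 : ℕ)) : ℝ) ≤ nn m := by exact_mod_cast hT m hm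
        have h2 := half_J ℓ
        unfold J at *; linarith)
    have h4 : J m ^ (-(d : ℝ) - 1) = J m ^ (-(d : ℝ) - (q + 1 : ℕ)) * J m ^ q := by
      rw [← Real.rpow_natCast, ← Real.rpow_add (J_pos _)]; congr 1; push_cast; ring
    calc _ ≤ (c * (J m ^ (-(d : ℝ) - (q + 1 : ℕ)) * Real.log (J m) ^ α)) *
          (t * ((g * J ℓ ^ (-b)) * (J m / J ℓ) ^ q)) :=
          mul_le_mul (hf m) h1 (abs_nonneg _) (mul_nonneg hc (JL_nonneg _ _ _))
      _ = _ := by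
        rw [h4, Real.rpow_sub (J_pos ℓ), Real.rpow_natCast, div_pow]; ring
  refine (Finset.sum_le_sum key).trans ?_
  rw [← Finset.mul_sum]
  have hc0 : 0 ≤ c * t * g * J ℓ ^ (-b - (q : ℝ)) := mul_nonneg (by positivity) (hJl _)
  refine (mul_le_mul_of_nonneg_left (hsum ℓ T hT) hc0).trans (le_of_eq ?_)
  rw [show -b - ((q + 1 : ℕ) : ℝ) = (-b - q) + -1 by push_cast; ring, Real.rpow_add (J_pos ℓ)]
  ring

lemma reg3 {d : ℕ} (hd : 1 ≤ d) (p α : ℕ) (b : ℝ) (hb : b ≤ d) (f γ : E d → ℝ)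
    (hf : BD (-(d : ℝ) - p) α f) (hγ : BD (-b) 0 γ) :
    ∃ C, 0 ≤ C ∧ ∀ (ℓ : E d) (T : Finset (E d)), (∀ m ∈ T, nn ℓ / 2 ≤ nn m) →
      (∀ m ∈ T, nn (m - ℓ) ≤ 2 * nn ℓ) →
      ∑ m ∈ T, |f m| * |γ (m - ℓ)| ≤
        C * (J ℓ ^ (-b - (p : ℝ)) * Real.log (J ℓ) ^ (α + 1)) := by
  obtain ⟨c, hc, hf⟩ := hf
  obtain ⟨g, hg, hγ⟩ := hγ
  obtain ⟨S, hS, hsum⟩ := shift_est hd b hb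
  have hl3 : 0 ≤ Real.log 3 := Real.log_nonneg (by norm_num)
  refine ⟨c * (2 ^ ((d : ℝ) + p) * (1 + 2 * Real.log 3) ^ α) * g * S, by positivity, fun ℓ T hT hT2 => ?_⟩
  have hJl := Real.rpow_nonneg (J_pos ℓ).le
  have hL := log_J_nonneg ℓ
  have key : ∀ m ∈ T, |f m| * |γ (m - ℓ)| ≤
      (c * (2 ^ ((d : ℝ) + p) * (1 + 2 * Real.log 3) ^ α) * g * (J ℓ ^ (-(d : ℝ) - p) * Real.log (J ℓ) ^ α)) *
        J (m - ℓ) ^ (-b) := by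
    intro m hm
    have h1 : J m ^ (-(d : ℝ) - p) ≤ 2 ^ ((d : ℝ) + p) * J ℓ ^ (-(d : ℝ) - p) := by
      have := rpow_neg_le (x := J m) (K := 2) (s := (d : ℝ) + p) (J_pos ℓ) two_pos (by
        have h1 : (((nn ℓ / 2 : ℕ)) : ℝ) ≤ nn m := by exact_mod_cast hT m hm
        have h2 := half_J ℓ
        unfold J at *; linarith) (by positivity)
      rwa [show -((d : ℝ) + p) = -d - p by ring] at this
    have h2 : Real.log (J m) ≤ (1 + 2 * Real.log 3) * Real.log (J ℓ) := by
      refine log_comp (J_pos m) (J_two ℓ) (by norm_num) ?_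
      have := nn_add_le (m - ℓ) ℓ
      rw [sub_add_cancel] at this
      have h4 : nn m ≤ 3 * nn ℓ := by have := hT2 m hm; omega
      have h3 : (nn m : ℝ) ≤ 3 * nn ℓ := by exact_mod_cast h4
      unfold J; linarith
    have h3 : J m ^ (-(d : ℝ) - p) * Real.log (J m) ^ α ≤
        (2 ^ ((d : ℝ) + p) * J ℓ ^ (-(d : ℝ) - p)) * ((1 + 2 * Real.log 3) * Real.log (J ℓ)) ^ α :=
      mul_le_mul h1 (pow_le_pow_left₀ (log_J_nonneg m) h2 _) (pow_nonneg (log_J_nonneg m) _)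
        (mul_nonneg (by positivity) (hJl _))
    have h5 := hγ (m - ℓ)
    rw [pow_zero, mul_one] at h5
    calc _ ≤ (c * ((2 ^ ((d : ℝ) + p) * J ℓ ^ (-(d : ℝ) - p)) * ((1 + 2 * Real.log 3) * Real.log (J ℓ)) ^ α)) *
          (g * J (m - ℓ) ^ (-b)) := by
          refine mul_le_mul ((hf m).trans (mul_le_mul_of_nonneg_left h3 hc)) h5 (abs_nonneg _) ?_
          have := hJl (-(d : ℝ) - p)
          positivity
      _ = _ := by rw [mul_pow]; ring
  refine (Finset.sum_le_sum key).trans ?_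
  rw [← Finset.mul_sum]
  refine (mul_le_mul_of_nonneg_left (hsum ℓ T hT2) ?_).trans (le_of_eq ?_)
  · have := hJl (-(d : ℝ) - p)
    positivity
  · rw [show -b - (p : ℝ) = (-(d : ℝ) - p) + (d - b) by ring, Real.rpow_add (J_pos ℓ)]
    ring

lemma reg4 {d : ℕ} (hd : 1 ≤ d) (p α : ℕ) (b : ℝ) (hb : 1 ≤ b) (f γ : E d → ℝ)
    (hf : BD (-(d : ℝ) - p) α f) (hγ : BD (-b) 0 γ) :
    ∃ C, 0 ≤ C ∧ ∀ (ℓ : E d) (T : Finset (E d)), (∀ m ∈ T, nn ℓ / 2 ≤ nn m) →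
      (∀ m ∈ T, 2 * nn ℓ ≤ nn (m - ℓ)) →
      ∑ m ∈ T, |f m| * |γ (m - ℓ)| ≤
        C * (J ℓ ^ (-b - (p : ℝ)) * Real.log (J ℓ) ^ (α + 1)) := by
  obtain ⟨c, hc, hf⟩ := hf
  obtain ⟨g, hg, hγ⟩ := hγ
  obtain ⟨S, hS, hsum⟩ := tail_est hd α (b + p) (by have := Nat.cast_nonneg (α := ℝ) p; linarith)
  refine ⟨c * g * 2 ^ b * S, by positivity, fun ℓ T hT hT2 => ?_⟩
  have key : ∀ m ∈ T, |f m| * |γ (m - ℓ)| ≤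
      (c * g * 2 ^ b) * (J m ^ (-(d : ℝ) - (b + p)) * Real.log (J m) ^ α) := by
    intro m hm
    have h1 : J (m - ℓ) ^ (-b) ≤ 2 ^ b * J m ^ (-b) := by
      refine rpow_neg_le (J_pos m) two_pos ?_ (by linarith)
      have := nn_add_le (m - ℓ) ℓ
      rw [sub_add_cancel] at this
      have h4 : nn m ≤ 2 * nn (m - ℓ) := by have := hT2 m hm; omega
      have h3 : (nn m : ℝ) ≤ 2 * nn (m - ℓ) := by exact_mod_cast h4
      unfold J; linarith
    have h5 := hγ (m - ℓ)
    rw [pow_zero, mul_one] at h5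
    calc _ ≤ (c * (J m ^ (-(d : ℝ) - p) * Real.log (J m) ^ α)) * (g * (2 ^ b * J m ^ (-b))) :=
          mul_le_mul (hf m) (h5.trans (mul_le_mul_of_nonneg_left h1 hg)) (abs_nonneg _)
            (mul_nonneg hc (JL_nonneg _ _ _))
      _ = _ := by
        rw [show -(d : ℝ) - (b + p) = (-d - p) + -b by ring, Real.rpow_add (J_pos m)]; ring
  refine (Finset.sum_le_sum key).trans ?_
  rw [← Finset.mul_sum]
  refine (mul_le_mul_of_nonneg_left (hsum ℓ T hT) (by positivity)).trans (le_of_eq ?_)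
  rw [show -b - (p : ℝ) = -(b + p) by ring]; ring

theorem main_est {d : ℕ} (hd : 1 ≤ d) (p α : ℕ) (b : ℝ) (hb1 : 1 ≤ b) (hb : b ≤ d) (f γ : E d → ℝ)
    (hf : BD (-(d : ℝ) - p) α f) (hk : Kill p f)
    (hγ : ∀ l : List (E d), BD (-b - (l.length : ℝ)) 0 (DL l γ)) :
    BD (-b - p) (α + 1) (fun ℓ => ∑' m, f m * γ (m - ℓ)) := by
  have hγ0 : BD (-b) 0 γ := by simpa [DL] using hγ []
  obtain ⟨C1, hC1, h1⟩ := reg1 hd p α b (by linarith) f γ hf hγ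
  obtain ⟨C2, hC2, h2⟩ := reg2 hd p α b f γ hf hγ
  obtain ⟨C3, hC3, h3⟩ := reg3 hd p α b hb f γ hf hγ0
  obtain ⟨C4, hC4, h4⟩ := reg4 hd p α b hb1 f γ hf hγ0
  refine ⟨C1 + (C2 + (C3 + C4)), by positivity, fun ℓ => ?_⟩
  set W := J ℓ ^ (-b - (p : ℝ)) * Real.log (J ℓ) ^ (α + 1) with hW
  set φ : E d → ℝ := fun m => γ (m - ℓ) with hφ
  have hφB : BD (-b) 0 φ := by
    have := (BD_cl (-b) 0).shift (-ℓ) γ hγ0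
    simpa [hφ, sub_eq_add_neg] using this
  have hs : Summable fun m => f m * φ m := by
    refine (hf.mul hφB).summable hd ?_
    have := Nat.cast_nonneg (α := ℝ) p
    linarith
  have hT := hk _ (Tay_mem p φ)
  have hsum : HasSum (fun m => f m * (φ m - Tay p φ m)) (∑' m, f m * φ m) := by
    have := hs.hasSum.sub hT
    rw [sub_zero] at this
    simpa [mul_sub] using this
  have hbd : ∀ T : Finset (E d), |∑ m ∈ T, f m * (φ m - Tay p φ m)| ≤ (C1 + (C2 + (C3 + C4))) * W := by
    intro T
    refine (Finset.abs_sum_le_sum_abs _ _).trans ?_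
    simp only [abs_mul]
    rw [← Finset.sum_filter_add_sum_filter_not T (fun m => nn m ≤ nn ℓ / 2), add_mul]
    refine add_le_add (h1 ℓ _ (by simp)) ?_
    set T2 := T.filter (fun m => ¬ nn m ≤ nn ℓ / 2) with hT2
    have hT2' : ∀ m ∈ T2, nn ℓ / 2 ≤ nn m := by
      intro m hm; rw [hT2, Finset.mem_filter] at hm; omega
    have e : ∑ m ∈ T2, |f m| * |φ m - Tay p φ m| ≤ ∑ m ∈ T2, |f m| * |Tay p φ m| + ∑ m ∈ T2, |f m| * |φ m| := by
      rw [← Finset.sum_add_distrib]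
      refine Finset.sum_le_sum fun m _ => ?_
      rw [← mul_add]
      refine mul_le_mul_of_nonneg_left ?_ (abs_nonneg _)
      rw [add_comm]; exact abs_sub _ _
    refine e.trans ?_
    rw [add_mul]
    refine add_le_add (h2 ℓ _ hT2') ?_
    rw [← Finset.sum_filter_add_sum_filter_not T2 (fun m => nn (m - ℓ) ≤ 2 * nn ℓ), add_mul]
    refine add_le_add (h3 ℓ _ (fun m hm => hT2' m (Finset.mem_filter.1 hm).1) (fun m hm => (Finset.mem_filter.1 hm).2))
      (h4 ℓ _ (fun m hm => hT2' m (Finset.mem_filter.1 hm).1) (fun m hm => ?_))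
    have := (Finset.mem_filter.1 hm).2
    omega
  exact le_of_tendsto' (hsum.abs) hbd

lemma HasSum_congr {β : Type*} {f g : β → ℝ} {a : ℝ} (h : HasSum f a) (e : ∀ x, g x = f x) : HasSum g a := by
  have : g = f := funext e
  rw [this]; exact h


/-- The lattice operator in integer coordinates. -/
def HZ {d N : ℕ} {ι : Type*} [Fintype ι] (s : ι → E d) (K : ι → ι → Fin N → Fin N → ℝ)
    (v : Fin N → E d → ℝ) (i : Fin N) (z : E d) : ℝ :=
  ∑ σ, ∑ ρ, ∑ k, K σ ρ i k * (Df (s ρ) (v k) (z - s σ) - Df (s ρ) (v k) z)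

section rep
variable {d N : ℕ} {ι : Type*} [Fintype ι] (s : ι → E d) (K : ι → ι → Fin N → Fin N → ℝ)

lemma HZ_shift (v : Fin N → E d → ℝ) (b : E d) (i : Fin N) (z : E d) :
    HZ s K (fun k m => v k (m + b)) i z = HZ s K v i (z + b) := by
  unfold HZ
  refine Finset.sum_congr rfl fun σ _ => Finset.sum_congr rfl fun ρ _ => Finset.sum_congr rfl fun k _ => ?_
  simp only [Df]
  rw [show z - s σ + s ρ + b = z + b - s σ + s ρ by abel, show z - s σ + b = z + b - s σ by abel,
    show z + s ρ + b = z + b + s ρ by abel]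

lemma HZ_sub (v w : Fin N → E d → ℝ) (i : Fin N) (z : E d) :
    HZ s K (fun k m => v k m - w k m) i z = HZ s K v i z - HZ s K w i z := by
  unfold HZ
  rw [← Finset.sum_sub_distrib]
  refine Finset.sum_congr rfl fun σ _ => ?_
  rw [← Finset.sum_sub_distrib]
  refine Finset.sum_congr rfl fun ρ _ => ?_
  rw [← Finset.sum_sub_distrib]
  refine Finset.sum_congr rfl fun k _ => ?_
  simp only [Df]; ring

lemma HZ_const (v : Fin N → E d → ℝ) (c : Fin N → ℝ) (i : Fin N) (z : E d) :
    HZ s K (fun k m => v k m - c k) i z = HZ s K v i z := by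
  unfold HZ
  simp [Df]

lemma HZ_Df (v : Fin N → E d → ℝ) (a : E d) (i : Fin N) :
    HZ s K (fun k => Df a (v k)) i = Df a (HZ s K v i) := by
  ext z
  have := HZ_sub s K (fun k m => v k (m + a)) v i z
  rw [HZ_shift] at this
  exact this

lemma HZ_DL (l : List (E d)) : ∀ (v : Fin N → E d → ℝ) (i : Fin N),
    HZ s K (fun k => DL l (v k)) i = DL l (HZ s K v i) := by
  induction l with
  | nil => intro v i; rfl
  | cons a l ih =>
    intro v i
    simp only [DL]
    rw [← HZ_Df]
    exact ih _ i

/-- stress -/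
def W (v : Fin N → E d → ℝ) (σ : ι) (i : Fin N) (z : E d) : ℝ := ∑ ρ, ∑ k, K σ ρ i k * Df (s ρ) (v k) z

lemma HZ_W (v : Fin N → E d → ℝ) (i : Fin N) (z : E d) :
    HZ s K v i z = ∑ σ, (W s K v σ i (z - s σ) - W s K v σ i z) := by
  unfold HZ W
  refine Finset.sum_congr rfl fun σ _ => ?_
  rw [← Finset.sum_sub_distrib]
  refine Finset.sum_congr rfl fun ρ _ => ?_
  rw [← Finset.sum_sub_distrib]
  exact Finset.sum_congr rfl fun k _ => by ring

/-- flux -/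
def flux (v g : Fin N → E d → ℝ) (σ : ι) (z : E d) : ℝ :=
  ∑ i, (v i z * W s K g σ i (z - s σ) - W s K v σ i (z - s σ) * g i z)

lemma cross (hK : ∀ σ ρ i j, K σ ρ i j = K ρ σ j i) (v g : Fin N → E d → ℝ) (z : E d) :
    ∑ σ, ∑ i, W s K v σ i z * Df (s σ) (g i) z = ∑ σ, ∑ i, W s K g σ i z * Df (s σ) (v i) z := by
  have e : ∀ v g : Fin N → E d → ℝ, ∑ σ, ∑ i, W s K v σ i z * Df (s σ) (g i) z =
      ∑ σ, ∑ ρ, ∑ i, ∑ k, K σ ρ i k * Df (s ρ) (v k) z * Df (s σ) (g i) z := by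
    intro v g
    refine Finset.sum_congr rfl fun σ _ => ?_
    rw [Finset.sum_comm]
    refine Finset.sum_congr rfl fun i _ => ?_
    simp only [W, Finset.sum_mul]
  rw [e, e, Finset.sum_comm]
  refine Finset.sum_congr rfl fun σ _ => Finset.sum_congr rfl fun ρ _ => ?_
  rw [Finset.sum_comm]
  refine Finset.sum_congr rfl fun i _ => Finset.sum_congr rfl fun k _ => ?_
  rw [hK ρ σ k i]; ring

lemma green_id (hK : ∀ σ ρ i j, K σ ρ i j = K ρ σ j i) (v g : Fin N → E d → ℝ) (z : E d) :
    ∑ σ, (flux s K v g σ (z + s σ) - flux s K v g σ z) =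
      ∑ i, HZ s K v i z * g i z - ∑ i, v i z * HZ s K g i z := by
  have h := (cross s K hK v g z).symm
  have e1 : ∑ i, HZ s K v i z * g i z = ∑ σ, ∑ i, (W s K v σ i (z - s σ) - W s K v σ i z) * g i z := by
    rw [Finset.sum_comm]
    refine Finset.sum_congr rfl fun i _ => ?_
    rw [HZ_W, Finset.sum_mul]
  have e2 : ∑ i, v i z * HZ s K g i z = ∑ σ, ∑ i, v i z * (W s K g σ i (z - s σ) - W s K g σ i z) := by
    rw [Finset.sum_comm]
    refine Finset.sum_congr rfl fun i _ => ?_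
    rw [HZ_W, Finset.mul_sum]
  rw [e1, e2, ← sub_eq_zero]
  rw [← sub_eq_zero] at h
  rw [← h]
  simp only [← Finset.sum_sub_distrib, flux]
  refine Finset.sum_congr rfl fun σ _ => Finset.sum_congr rfl fun i _ => ?_
  simp only [Df, add_sub_cancel_right]; ring

lemma W_P {P : (E d → ℝ) → Prop} (hP : Cl P) (v : Fin N → E d → ℝ) (h : ∀ ρ k, P (Df (s ρ) (v k)))
    (σ : ι) (i : Fin N) : P (fun z => W s K v σ i (z - s σ)) := by
  have : P (fun z => W s K v σ i z) := by
    unfold W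
    refine hP.sum' _ _ fun ρ _ => hP.sum' _ _ fun k _ => ?_
    exact hP.smul (K σ ρ i k) _ (h ρ k)
  have := hP.shift (-s σ) _ this
  simpa [sub_eq_add_neg] using this

lemma rep (hd : 2 ≤ d) (hK : ∀ σ ρ i j, K σ ρ i j = K ρ σ j i) (u : Fin N → E d → ℝ)
    (hu : ∀ a k, LO 0 (Df a (u k))) (p α : ℕ) (hF : ∀ i, BD (-(d : ℝ) - p) α (HZ s K u i))
    (G : Fin N → Fin N → E d → ℝ)
    (hG : ∀ k i z, HZ s K (fun i => G i k) i z = if z = 0 then (Pi.single k (1 : ℝ) : Fin N → ℝ) i else 0)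
    (hGd : ∀ l : List (E d), l ≠ [] → ∀ i k, BD (2 - (d : ℝ) - (l.length : ℝ)) 0 (DL l (G i k)))
    (k : Fin N) (a ℓ : E d) :
    HasSum (fun m => ∑ i, HZ s K u i m * Df (-a) (G i k) (m - ℓ)) (Df a (u k) ℓ) := by
  classical
  have hd1 : 1 ≤ d := by omega
  have hd2 : (2 : ℝ) ≤ d := by exact_mod_cast hd
  set v : Fin N → E d → ℝ := fun k m => u k m - u k 0 with hv
  set g : Fin N → E d → ℝ := fun i m => Df (-a) (G i k) (m - ℓ) with hg
  have hDv : ∀ a k, Df a (v k) = Df a (u k) := by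
    intro a k; ext z; simp [Df, hv]
  have hvlo : ∀ k, LO 1 (v k) := by
    intro k ε hε
    have := little_o (v k) (fun i ε hε => by
      rw [hDv]; obtain ⟨r, hr⟩ := hu (eb i) k ε hε
      exact ⟨r, fun z hz => by simpa using hr z hz⟩) ε hε
    simpa using this
  have hgB : ∀ i, BD (1 - (d : ℝ)) 0 (g i) := by
    intro i
    have := (BD_cl _ _).shift (-ℓ) _ (hGd [-a] (by simp) i k)
    simp only [DL, List.length_singleton] at this
    rw [show (1 - (d : ℝ)) = 2 - d - ((1 : ℕ) : ℝ) by push_cast; ring]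
    simpa [hg, sub_eq_add_neg] using this
  have hgD : ∀ ρ i, BD (-(d : ℝ)) 0 (Df (s ρ) (g i)) := by
    intro ρ i
    have := (BD_cl _ _).shift (-ℓ) _ (hGd [-a, s ρ] (by simp) i k)
    simp only [DL, List.length_cons, List.length_nil] at this
    rw [show (-(d : ℝ)) = 2 - d - ((0 + 1 + 1 : ℕ) : ℝ) by push_cast; ring]
    convert this using 1
    ext z
    simp only [Df, hg, sub_eq_add_neg]
    rw [show z + s ρ + -ℓ = z + -ℓ + s ρ by abel]
  have hHv : ∀ i z, HZ s K v i z = HZ s K u i z := fun i z => HZ_const s K u _ i z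
  have hflux : ∀ σ, LO (1 - (d : ℝ)) (flux s K v g σ) := by
    intro σ
    refine (LO_cl _).sum' _ _ fun i _ => (LO_cl _).sub ?_ ?_
    · have := (hvlo i).mul (W_P s K (BD_cl (-(d : ℝ)) 0) g hgD σ i)
      rwa [← sub_eq_add_neg] at this
    · have := (W_P s K (LO_cl 0) v (fun ρ k => by rw [hDv]; exact hu _ _) σ i).mul (hgB i)
      rwa [zero_add] at this
  have hs1 : Summable fun m => ∑ i, HZ s K u i m * g i m := by
    refine summable_sum fun i _ => ?_
    refine ((hF i).mul (hgB i)).summable hd1 ?_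
    have := Nat.cast_nonneg (α := ℝ) p
    linarith
  have hHg : ∀ i m, HZ s K g i m = (if m = ℓ + a then (Pi.single k (1 : ℝ) : Fin N → ℝ) i else 0) -
      (if m = ℓ then (Pi.single k (1 : ℝ) : Fin N → ℝ) i else 0) := by
    intro i m
    have e : HZ s K g i m = HZ s K (fun i => Df (-a) (G i k)) i (m + -ℓ) := by
      rw [← HZ_shift]; simp [hg, sub_eq_add_neg]
    rw [e, HZ_Df, Df, hG, hG]
    have q1 : m + -ℓ + -a = 0 ↔ m = ℓ + a := by
      constructor
      · intro h; exact sub_eq_zero.1 (by rw [← h]; abel)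
      · rintro rfl; abel
    have q2 : m + -ℓ = 0 ↔ m = ℓ := by rw [← sub_eq_add_neg, sub_eq_zero]
    simp only [q1, q2]
  have hs2 : HasSum (fun m => ∑ i, v i m * HZ s K g i m) (v k (ℓ + a) - v k ℓ) := by
    have e : (fun m => ∑ i, v i m * HZ s K g i m) =
        fun m => (if m = ℓ + a then v k (ℓ + a) else 0) - (if m = ℓ then v k ℓ else 0) := by
      ext m
      simp only [hHg, mul_sub, Finset.sum_sub_distrib]
      congr 1
      · split_ifs with h
        · subst h; simp [Pi.single_apply]
        · simp
      · split_ifs with h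
        · subst h; simp [Pi.single_apply]
        · simp
    rw [e]
    exact (hasSum_ite_eq (ℓ + a) _).sub (hasSum_ite_eq ℓ _)
  have hS : HasSum (fun z => ∑ σ, (flux s K v g σ (z + s σ) - flux s K v g σ z))
      ((∑' m, ∑ i, HZ s K u i m * g i m) - (v k (ℓ + a) - v k ℓ)) := by
    have := hs1.hasSum.sub hs2
    refine HasSum_congr this fun z => ?_
    rw [green_id s K hK]
    simp only [hHv]
  have h0 := div_zero' hd1 s (flux s K v g) hflux _ hS
  have h1 := hs1.hasSum
  rw [show (∑' m, ∑ i, HZ s K u i m * g i m) = Df a (u k) ℓ by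
    simp only [hv] at h0; simp only [Df]; linarith] at h1
  exact h1

lemma conv_BD (hd : 1 ≤ d) (p α : ℕ) (b : ℝ) (hb1 : 1 ≤ b) (hb : b ≤ d) (F γ : Fin N → E d → ℝ) (ψ : E d → ℝ)
    (hf : ∀ i, BD (-(d : ℝ) - p) α (F i)) (hk : ∀ i, Kill p (F i))
    (hγ : ∀ i, ∀ l : List (E d), BD (-b - (l.length : ℝ)) 0 (DL l (γ i)))
    (hψ : ∀ ℓ, HasSum (fun m => ∑ i, F i m * γ i (m - ℓ)) (ψ ℓ)) : BD (-b - p) (α + 1) ψ := by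
  have e : ψ = fun ℓ => ∑ i, ∑' m, F i m * γ i (m - ℓ) := by
    ext ℓ
    rw [← (hψ ℓ).tsum_eq]
    refine Summable.tsum_finsetSum fun i _ => ?_
    have h0 : BD (-b) 0 (γ i) := by simpa [DL] using hγ i []
    have h1 := (BD_cl (-b) 0).shift (-ℓ) _ h0
    have := ((hf i).mul h1).summable hd (by have := Nat.cast_nonneg (α := ℝ) p; linarith)
    simpa [sub_eq_add_neg] using this
  rw [e]
  exact (BD_cl _ _).sum' _ _ fun i _ => main_est hd p α b hb1 hb (F i) (γ i) (hf i) (hk i) (hγ i)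

theorem thmZ (hd : 2 ≤ d) (hK : ∀ σ ρ i j, K σ ρ i j = K ρ σ j i) (u : Fin N → E d → ℝ)
    (hu : ∀ a k, LO 0 (Df a (u k))) (p α : ℕ) (hF : ∀ i, BD (-(d : ℝ) - p) α (HZ s K u i))
    (hk : ∀ i, Kill p (HZ s K u i))
    (G : Fin N → Fin N → E d → ℝ)
    (hG : ∀ k i z, HZ s K (fun i => G i k) i z = if z = 0 then (Pi.single k (1 : ℝ) : Fin N → ℝ) i else 0)
    (hGd : ∀ l : List (E d), l ≠ [] → ∀ i k, BD (2 - (d : ℝ) - (l.length : ℝ)) 0 (DL l (G i k)))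
    (k : Fin N) (a : E d) :
    BD (1 - (d : ℝ) - p) (α + 1) (Df a (u k)) ∧ ∀ b, BD (-(d : ℝ) - p) (α + 1) (Df b (Df a (u k))) := by
  have hd2 : (2 : ℝ) ≤ d := by exact_mod_cast hd
  have hr := fun ℓ => rep s K hd hK u hu p α hF G hG hGd k a ℓ
  constructor
  · rw [show (1 - (d : ℝ)) = -((d : ℝ) - 1) by ring]
    refine conv_BD (by omega) p α _ (by linarith) (by linarith) _ (fun i => Df (-a) (G i k)) _ hF hk (fun i l => ?_) hr
    have := hGd (-a :: l) (by simp) i k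
    convert this using 1
    · simp; ring
    · rfl
  · intro b
    refine conv_BD (by omega) p α _ (by linarith) le_rfl _ (fun i => Df (-b) (Df (-a) (G i k))) _ hF hk (fun i l => ?_) ?_
    · have := hGd (-a :: -b :: l) (by simp) i k
      convert this using 1
      · simp; ring
      · rfl
    · intro ℓ
      have := (hr (ℓ + b)).sub (hr ℓ)
      refine HasSum_congr this fun m => ?_
      rw [← Finset.sum_sub_distrib]
      refine Finset.sum_congr rfl fun i _ => ?_
      rw [← mul_sub]; congr 1
      rw [Df, show m - ℓ + -b = m - (ℓ + b) by abel]

lemma Cl.dlP {P : (E d → ℝ) → Prop} (h : Cl P) (l : List (E d)) : ∀ φ : E d → ℝ, P φ → P (DL l φ) := by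
  induction l with
  | nil => intro φ hφ; exact hφ
  | cons a l ih => intro φ hφ; exact ih _ (h.df a hφ)

lemma kill_list (hd : 1 ≤ d) (p α n : ℕ) (f : E d → ℝ)
    (hf : ∀ l : List (E d), l.length ≤ n → BD (-(d : ℝ) - p - (l.length : ℝ)) α (DL l f)) (hk : Kill p f) :
    ∀ l : List (E d), l.length ≤ n → Kill (p + l.length) (DL l f) := by
  intro l
  induction l using List.reverseRecOn with
  | nil => intro _; simpa [DL] using hk
  | append_singleton l a ih =>
    intro hl
    have hl' : l.length + 1 ≤ n := by simpa using hl
    rw [DL_append]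
    simp only [DL, List.length_append, List.length_singleton]
    rw [← add_assoc]
    refine kill_step hd _ α _ a ?_ ?_ (ih (by omega))
    · have := hf l (by omega)
      convert this using 1
      push_cast; ring
    · have := hf (l ++ [a]) hl
      rw [DL_append] at this
      simp only [DL, List.length_append, List.length_singleton] at this
      convert this using 1
      push_cast; ring

theorem thmZj (hd : 2 ≤ d) (hK : ∀ σ ρ i j, K σ ρ i j = K ρ σ j i) (u : Fin N → E d → ℝ)
    (hu : ∀ a k, LO 0 (Df a (u k))) (p α n : ℕ)
    (hF : ∀ l : List (E d), l.length ≤ n → ∀ i, BD (-(d : ℝ) - p - (l.length : ℝ)) α (DL l (HZ s K u i)))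
    (hk : ∀ i, Kill p (HZ s K u i))
    (G : Fin N → Fin N → E d → ℝ)
    (hG : ∀ k i z, HZ s K (fun i => G i k) i z = if z = 0 then (Pi.single k (1 : ℝ) : Fin N → ℝ) i else 0)
    (hGd : ∀ l : List (E d), l ≠ [] → ∀ i k, BD (2 - (d : ℝ) - (l.length : ℝ)) 0 (DL l (G i k)))
    (k : Fin N) (l : List (E d)) (hl : l.length = n + 2) :
    BD (2 - (d : ℝ) - p - (n + 2 : ℕ)) (α + 1) (DL l (u k)) := by
  obtain ⟨a, l1, rfl⟩ := List.exists_cons_of_length_eq_add_one hl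
  obtain ⟨b, l, rfl⟩ := List.exists_cons_of_length_eq_add_one (by simpa using hl : l1.length = n + 1)
  have hln : l.length = n := by simpa using hl
  have := (thmZ s K hd hK (fun k => DL l (u k)) (fun a k => by
    rw [Df_DL]; exact (LO_cl 0).dlP l _ (hu a k)) (p + n) α (fun i => by
      rw [HZ_DL]
      have := hF l hln.le i
      rw [hln] at this
      convert this using 1
      push_cast; ring) (fun i => by
      rw [HZ_DL]
      have := kill_list (by omega) p α n _ (fun l hl => hF l hl i) (hk i) l hln.le
      rwa [hln] at this) G hG hGd k a).2 b
  rw [Df_DL, Df_DL] at this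
  simp only [DL]
  convert this using 1
  push_cast; ring

end rep

lemma powerset_DL {d : ℕ} {κ : Type*} [DecidableEq κ] (a : κ → E d) (I : Finset κ) : ∀ (φ : E d → ℝ) (z : E d),
    ∑ S ∈ I.powerset, ((-1 : ℝ) ^ (I.card - S.card)) * φ (z + ∑ i ∈ S, a i) = DL (I.toList.map a) φ z := by
  induction I using Finset.induction_on with
  | empty => intro φ z; simp [DL]
  | insert x s hx ih =>
    intro φ z
    have hp : ((insert x s).toList.map a).Perm (a x :: s.toList.map a) := by
      have := (Finset.toList_insert hx).map a
      simpa using this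
    rw [DL_perm hp, DL, ← ih, Finset.sum_powerset_insert hx, ← Finset.sum_add_distrib]
    refine Finset.sum_congr rfl fun t ht => ?_
    rw [Finset.mem_powerset] at ht
    have hxt : x ∉ t := fun h => hx (ht h)
    have hc := Finset.card_le_card ht
    rw [Finset.card_insert_of_notMem hx, Finset.card_insert_of_notMem hxt, Finset.sum_insert hxt,
      Nat.add_sub_add_right, show s.card + 1 - t.card = (s.card - t.card) + 1 by omega, pow_succ, Df,
      show z + (a x + ∑ i ∈ t, a i) = z + ∑ i ∈ t, a i + a x by abel]
    ring

lemma lp_add {d : ℕ} (A : Matrix (Fin d) (Fin d) ℝ) (a b : E d) :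
    latticePt d A (a + b) = latticePt d A a + latticePt d A b := by
  ext i; simp [latticePt, mul_add, Finset.sum_add_distrib]

/-- additive version of `latticePt`. -/
def lpH {d : ℕ} (A : Matrix (Fin d) (Fin d) ℝ) : E d →+ Vec d where
  toFun := latticePt d A
  map_zero' := by ext i; simp [latticePt]
  map_add' := lp_add A

lemma lpH_apply {d : ℕ} (A : Matrix (Fin d) (Fin d) ℝ) (z : E d) : lpH A z = latticePt d A z := rfl

lemma lp_inv {d : ℕ} (A : Matrix (Fin d) (Fin d) ℝ) (hA : IsUnit A.det) (z : E d) (i : Fin d) :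
    (z i : ℝ) = ∑ j, A⁻¹ i j * latticePt d A z j := by
  have h1 : latticePt d A z = A.mulVec (fun j => (z j : ℝ)) := by
    ext i; rfl
  have h2 : A⁻¹.mulVec (latticePt d A z) = fun j => (z j : ℝ) := by
    rw [h1, Matrix.mulVec_mulVec, Matrix.nonsing_inv_mul A hA, Matrix.one_mulVec]
  exact (congrFun h2 i).symm

lemma lp_inj {d : ℕ} (A : Matrix (Fin d) (Fin d) ℝ) (hA : IsUnit A.det) : Function.Injective (latticePt d A) := by
  intro a b h
  ext i
  have h1 := lp_inv A hA a i
  have h2 := lp_inv A hA b i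
  rw [h, ← h2] at h1
  exact_mod_cast h1

lemma sqrt_sum_le {κ : Type*} (s : Finset κ) (x : κ → ℝ) (hx : ∀ i ∈ s, 0 ≤ x i) :
    Real.sqrt (∑ i ∈ s, x i ^ 2) ≤ ∑ i ∈ s, x i := by
  rw [Real.sqrt_le_left (Finset.sum_nonneg hx)]
  exact Finset.sum_sq_le_sq_sum_of_nonneg hx

lemma le_sqrt_sum {κ : Type*} (s : Finset κ) (x : κ → ℝ) (i : κ) (hi : i ∈ s) :
    |x i| ≤ Real.sqrt (∑ i ∈ s, x i ^ 2) := by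
  refine Real.abs_le_sqrt ?_
  exact Finset.single_le_sum (f := fun i => x i ^ 2) (fun i _ => sq_nonneg _) hi

lemma enorm_nonneg' {n : ℕ} (v : Vec n) : 0 ≤ enorm v := Real.sqrt_nonneg _

lemma abs_le_enorm {n : ℕ} (v : Vec n) (i : Fin n) : |v i| ≤ enorm v := le_sqrt_sum _ v i (Finset.mem_univ i)

lemma enorm_le {n : ℕ} (v : Vec n) : enorm v ≤ ∑ i, |v i| := by
  have := sqrt_sum_le Finset.univ (fun i => |v i|) (fun _ _ => abs_nonneg _)
  simpa [enorm] using this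

lemma comp_le_DnormJ {d N : ℕ} (R : Finset (Vec d)) (j : ℕ) (u : Vec d → Vec N) (ℓ : Vec d)
    (ρs : Fin j → {x // x ∈ R}) (k : Fin N) :
    |Dmulti (fun i => (ρs i : Vec d)) u ℓ k| ≤ DnormJ R j u ℓ := by
  refine (abs_le_enorm _ k).trans ?_
  have := le_sqrt_sum Finset.univ (fun ρs : Fin j → {x // x ∈ R} => enorm (Dmulti (fun i => (ρs i : Vec d)) u ℓ)) ρs
    (Finset.mem_univ _)
  rwa [abs_of_nonneg (enorm_nonneg' _)] at this

lemma DnormJ_le {d N : ℕ} (R : Finset (Vec d)) (j : ℕ) (u : Vec d → Vec N) (ℓ : Vec d) :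
    DnormJ R j u ℓ ≤ ∑ ρs : Fin j → {x // x ∈ R}, ∑ k, |Dmulti (fun i => (ρs i : Vec d)) u ℓ k| := by
  refine (sqrt_sum_le Finset.univ _ (fun _ _ => enorm_nonneg' _)).trans ?_
  exact Finset.sum_le_sum fun _ _ => enorm_le _

lemma ang_two {n : ℕ} (v : Vec n) : 2 ≤ ang v := by have := enorm_nonneg' v; unfold ang; linarith

lemma ang_comp {d : ℕ} (A : Matrix (Fin d) (Fin d) ℝ) (hA : IsUnit A.det) :
    ∃ K : ℝ, 1 ≤ K ∧ ∀ z, ang (latticePt d A z) ≤ K * J z ∧ J z ≤ K * ang (latticePt d A z) := by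
  set a := ∑ i, ∑ j, |A i j| with ha
  set b := ∑ i, ∑ j, |A⁻¹ i j| with hb
  have ha0 : 0 ≤ a := Finset.sum_nonneg fun _ _ => Finset.sum_nonneg fun _ _ => abs_nonneg _
  have hb0 : 0 ≤ b := Finset.sum_nonneg fun _ _ => Finset.sum_nonneg fun _ _ => abs_nonneg _
  refine ⟨1 + a + b, by linarith, fun z => ?_⟩
  set x := latticePt d A z with hx
  have hn : (0 : ℝ) ≤ nn z := Nat.cast_nonneg _
  have hx0 := enorm_nonneg' x
  have h1 : enorm x ≤ a * nn z := by
    refine (enorm_le x).trans ?_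
    rw [ha, Finset.sum_mul]
    refine Finset.sum_le_sum fun i _ => ?_
    rw [Finset.sum_mul]
    refine (Finset.abs_sum_le_sum_abs _ _).trans (Finset.sum_le_sum fun j _ => ?_)
    rw [abs_mul]
    refine mul_le_mul_of_nonneg_left ?_ (abs_nonneg _)
    have := natAbs_le_nn z j
    rw [← Int.cast_abs, ← Int.natCast_natAbs]
    exact_mod_cast this
  have h2 : (nn z : ℝ) ≤ b * enorm x := by
    have h3 : nn z ≤ ⌊b * enorm x⌋₊ := by
      rw [nn_le_iff]
      intro i
      refine Nat.le_floor ?_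
      have e : (((z i).natAbs : ℕ) : ℝ) = |(z i : ℝ)| := by
        rw [← Int.cast_abs, ← Int.natCast_natAbs]; simp
      rw [e, lp_inv A hA z i]
      refine (Finset.abs_sum_le_sum_abs _ _).trans ?_
      have h5 : ∑ j, |A⁻¹ i j| ≤ b :=
        Finset.single_le_sum (f := fun i => ∑ j, |A⁻¹ i j|) (fun _ _ => Finset.sum_nonneg fun _ _ => abs_nonneg _)
          (Finset.mem_univ i)
      refine le_trans ?_ (mul_le_mul_of_nonneg_right h5 hx0)
      rw [Finset.sum_mul]
      refine Finset.sum_le_sum fun j _ => ?_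
      rw [abs_mul]
      exact mul_le_mul_of_nonneg_left (abs_le_enorm _ j) (abs_nonneg _)
    exact (Nat.cast_le.2 h3).trans (Nat.floor_le (by positivity))
  constructor
  · unfold ang J
    nlinarith [mul_nonneg hb0 hn]
  · unfold ang J
    nlinarith [mul_nonneg ha0 hx0]

lemma comp_log {x y K e : ℝ} (α : ℕ) (hx : 2 ≤ x) (hy : 2 ≤ y) (hK : 1 ≤ K) (h1 : x ≤ K * y) (h2 : y ≤ K * x) :
    x ^ e * Real.log x ^ α ≤ (K ^ |e| * (1 + 2 * Real.log K) ^ α) * (y ^ e * Real.log y ^ α) := by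
  have hx0 : 0 < x := by linarith
  have hy0 : 0 < y := by linarith
  have a1 := rpow_comp hx0 hy0 hK h1 h2 e
  have a2 := log_comp hx0 hy hK h1
  have a3 : 0 ≤ Real.log x := Real.log_nonneg (by linarith)
  have a4 := Real.rpow_nonneg hy0.le e
  have a5 := Real.rpow_nonneg (by linarith : 0 ≤ K) |e|
  calc _ ≤ (K ^ |e| * y ^ e) * ((1 + 2 * Real.log K) * Real.log y) ^ α :=
        mul_le_mul a1 (pow_le_pow_left₀ a3 a2 _) (pow_nonneg a3 _) (by positivity)
    _ = _ := by rw [mul_pow]; ring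

lemma BD_of_ang {d : ℕ} (A : Matrix (Fin d) (Fin d) ℝ) (hA : IsUnit A.det) (e : ℝ) (α : ℕ) (ψ : E d → ℝ) (c : ℝ)
    (h : ∀ z, |ψ z| ≤ c * ang (latticePt d A z) ^ e * Real.log (ang (latticePt d A z)) ^ α) : BD e α ψ := by
  obtain ⟨K, hK, hc⟩ := ang_comp A hA
  have hlK := Real.log_nonneg hK
  refine ⟨|c| * (K ^ |e| * (1 + 2 * Real.log K) ^ α), by positivity, fun z => (h z).trans ?_⟩
  rw [mul_assoc, mul_assoc]
  have h1 := comp_log (e := e) α (ang_two _) (J_two z) hK (hc z).1 (hc z).2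
  have h0 : 0 ≤ ang (latticePt d A z) ^ e * Real.log (ang (latticePt d A z)) ^ α :=
    mul_nonneg (Real.rpow_nonneg (by linarith [ang_two (latticePt d A z)]) _)
      (pow_nonneg (Real.log_nonneg (by linarith [ang_two (latticePt d A z)])) _)
  exact (mul_le_mul_of_nonneg_right (le_abs_self c) h0).trans (mul_le_mul_of_nonneg_left h1 (abs_nonneg c))

lemma ang_of_BD {d : ℕ} (A : Matrix (Fin d) (Fin d) ℝ) (hA : IsUnit A.det) (e : ℝ) (α : ℕ) (ψ : E d → ℝ)
    (h : BD e α ψ) : ∃ c : ℝ, ∀ z, |ψ z| ≤ c * (ang (latticePt d A z) ^ e * Real.log (ang (latticePt d A z)) ^ α) := by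
  obtain ⟨K, hK, hc⟩ := ang_comp A hA
  obtain ⟨B, hB, h⟩ := h
  refine ⟨B * (K ^ |e| * (1 + 2 * Real.log K) ^ α), fun z => (h z).trans ?_⟩
  rw [mul_assoc]
  exact mul_le_mul_of_nonneg_left (comp_log (e := e) α (J_two z) (ang_two _) hK (hc z).2 (hc z).1) hB

section tr
variable {d N : ℕ} (A : Matrix (Fin d) (Fin d) ℝ) (R : Finset (Vec d)) (s : {x // x ∈ R} → E d)

lemma Dmulti_DL (hs : ∀ ρ, latticePt d A (s ρ) = ρ)
    {j : ℕ} (u : Vec d → Vec N) (k : Fin N) (ρs : Fin j → {x // x ∈ R}) (z : E d) :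
    Dmulti (fun i => (ρs i : Vec d)) u (latticePt d A z) k =
      DL (List.ofFn fun i => s (ρs i)) (fun z => u (latticePt d A z) k) z := by
  classical
  have hp : (List.ofFn fun i => s (ρs i)).Perm ((Finset.univ : Finset (Fin j)).toList.map fun i => s (ρs i)) := by
    rw [List.ofFn_eq_map]
    refine List.Perm.map _ ?_
    rw [← Multiset.coe_eq_coe, Finset.coe_toList]
    rfl
  rw [DL_perm hp, ← powerset_DL]
  unfold Dmulti
  rw [Finset.sum_apply, Finset.powerset_univ]
  refine Finset.sum_congr rfl fun S _ => ?_
  simp only [Pi.smul_apply, smul_eq_mul, Finset.card_univ, Fintype.card_fin]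
  congr 2
  rw [lp_add]
  congr 1
  rw [← lpH_apply, map_sum]
  congr 1
  refine funext fun i => ?_
  rw [lpH_apply, hs]

lemma Hop_HZ (hs : ∀ ρ, latticePt d A (s ρ) = ρ)
    (C : Vec d → Vec d → Fin N → Fin N → ℝ) (u : Vec d → Vec N) (z : E d) (i : Fin N) :
    Hop d N R C u (latticePt d A z) i =
      HZ s (fun σ ρ => C σ ρ) (fun k z => u (latticePt d A z) k) i z := by
  unfold Hop HZ
  rw [← Finset.sum_coe_sort R, Finset.sum_apply]
  refine Finset.sum_congr rfl fun σ _ => ?_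
  rw [← Finset.sum_coe_sort R, Finset.sum_apply]
  refine Finset.sum_congr rfl fun ρ _ => ?_
  simp only [Pi.sub_apply, mulV]
  rw [← Finset.sum_sub_distrib]
  refine Finset.sum_congr rfl fun k _ => ?_
  rw [mul_sub]
  have e : latticePt d A (z - s σ) = latticePt d A z - σ := by
    rw [← hs σ, ← lpH_apply, map_sub]; rfl
  simp only [D1, Df, lp_add, hs, e, Pi.sub_apply]

lemma span_closure (hs : ∀ ρ, latticePt d A (s ρ) = ρ)
    (hA : IsUnit A.det)
    (hRspan : ∀ x ∈ Lattice d A, ∃ c : Vec d → ℤ, x = ∑ ρ ∈ R, (c ρ : ℝ) • ρ) :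
    AddSubgroup.closure (Set.range s) = ⊤ := by
  rw [eq_top_iff]
  intro z _
  obtain ⟨c, hc⟩ := hRspan (latticePt d A z) ⟨z, rfl⟩
  have : z = ∑ ρ : {x // x ∈ R}, c ρ • s ρ := by
    apply lp_inj A hA
    rw [hc, ← lpH_apply, map_sum, ← Finset.sum_coe_sort R]
    refine Finset.sum_congr rfl fun ρ _ => ?_
    rw [map_zsmul, lpH_apply, hs, Int.cast_smul_eq_zsmul]
  rw [this]
  refine AddSubgroup.sum_mem _ fun ρ _ => AddSubgroup.zsmul_mem _ (AddSubgroup.subset_closure (Set.mem_range_self ρ)) _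

lemma lists_BD (hs : ∀ ρ, latticePt d A (s ρ) = ρ)
    (hA : IsUnit A.det) (hcl : AddSubgroup.closure (Set.range s) = ⊤)
    (u : Vec d → Vec N) (j α : ℕ) (e c : ℝ)
    (h : ∀ z, DnormJ R j u (latticePt d A z) ≤
      c * ang (latticePt d A z) ^ e * Real.log (ang (latticePt d A z)) ^ α) (k : Fin N)
    (l : List (E d)) (hl : l.length = j) : BD e α (DL l (fun z => u (latticePt d A z) k)) := by
  refine (BD_cl e α).gen_list _ hcl j _ (fun l' h1 h2 => ?_) l hl
  clear hl
  subst h2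
  choose ρs hρ using fun i : Fin l'.length => h1 _ (List.get_mem l' i)
  refine BD_of_ang A hA e α _ c fun z => ?_
  have e1 : l' = List.ofFn fun i => s (ρs i) := by
    simp only [hρ]; exact (List.ofFn_get l').symm
  rw [e1, ← Dmulti_DL A R s hs]
  refine le_trans ?_ (h z)
  exact comp_le_DnormJ R _ u _ ρs k

lemma DnormJ_BD (hs : ∀ ρ, latticePt d A (s ρ) = ρ)
    (hA : IsUnit A.det) (u : Vec d → Vec N) (j α : ℕ) (e : ℝ)
    (h : ∀ k, ∀ l : List (E d), l.length = j → BD e α (DL l (fun z => u (latticePt d A z) k))) :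
    ∃ c, ∀ z, DnormJ R j u (latticePt d A z) ≤
      c * ang (latticePt d A z) ^ e * Real.log (ang (latticePt d A z)) ^ α := by
  choose c hc using fun (ρs : Fin j → {x // x ∈ R}) (k : Fin N) =>
    ang_of_BD A hA e α _ (h k (List.ofFn fun i => s (ρs i)) (by simp))
  refine ⟨∑ ρs, ∑ k, c ρs k, fun z => (DnormJ_le _ _ _ _).trans ?_⟩
  rw [mul_assoc, Finset.sum_mul]
  refine Finset.sum_le_sum fun ρs _ => ?_
  rw [Finset.sum_mul]
  refine Finset.sum_le_sum fun k _ => ?_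
  rw [Dmulti_DL A R s hs]
  exact hc ρs k z

lemma LO_of_H1 (hs : ∀ ρ, latticePt d A (s ρ) = ρ)
    (hcl : AddSubgroup.closure (Set.range s) = ⊤) (u : Vec d → Vec N)
    (hu : InH1 A R u) (a : E d) (k : Fin N) : LO 0 (Df a (fun z => u (latticePt d A z) k)) := by
  refine (LO_cl 0).gen _ hcl _ ?_ a
  rintro _ ⟨ρ, rfl⟩ ε hε
  have h1 := hu.tendsto_cofinite_zero
  have h2 := h1.eventually (gt_mem_nhds (show (0 : ℝ) < ε ^ 2 by positivity))
  rw [Filter.eventually_cofinite] at h2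
  refine ⟨h2.toFinset.sup nn + 1, fun z hz => ?_⟩
  have h3 : Dnorm1Sq R u (latticePt d A z) < ε ^ 2 := by
    by_contra hcon
    have := Finset.le_sup (f := nn) (h2.mem_toFinset.2 hcon)
    omega
  have h4 : (enorm (D1 (ρ : Vec d) u (latticePt d A z))) ^ 2 ≤ Dnorm1Sq R u (latticePt d A z) :=
    Finset.single_le_sum (f := fun ρ => (enorm (D1 ρ u (latticePt d A z))) ^ 2) (fun _ _ => sq_nonneg _) ρ.2
  have h5 : enorm (D1 (ρ : Vec d) u (latticePt d A z)) ≤ ε :=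
    (pow_le_pow_iff_left₀ (enorm_nonneg' _) hε.le two_ne_zero).1 (by linarith)
  have h6 := (abs_le_enorm _ k).trans h5
  rw [Real.rpow_zero, mul_one]
  simpa [D1, Df, lp_add, hs] using h6

lemma mom_tr (hA : IsUnit A.det) (p : ℕ) (f : E d → ℝ)
    (h : ∀ i : ℕ, i < p → ∀ js : Fin i → Fin d,
      HasSum (fun z => f z * ∏ m, latticePt d A z (js m)) 0) : Kill p f := by
  refine kill_of_mono p f fun i hi js => ?_
  have e : ∀ z, f z * mono js z = ∑ t : Fin i → Fin d,
      (∏ m, A⁻¹ (js m) (t m)) * (f z * ∏ m, latticePt d A z (t m)) := by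
    intro z
    unfold mono
    simp only [lp_inv A hA z]
    rw [Finset.prod_univ_sum, Fintype.piFinset_univ, Finset.mul_sum]
    refine Finset.sum_congr rfl fun t _ => ?_
    rw [Finset.prod_mul_distrib]; ring
  have := hasSum_sum (s := Finset.univ) fun (t : Fin i → Fin d) _ => (h i hi t).mul_left (∏ m, A⁻¹ (js m) (t m))
  simp only [mul_zero, Finset.sum_const_zero] at this
  exact HasSum_congr this e

end tr

/-- Theorem: decay of lattice fields with vanishing moments. -/
theorem decay_with_vanishing_moments
    (d N : ℕ) (hd : 2 ≤ d)
    (A : Matrix (Fin d) (Fin d) ℝ) (hA : IsUnit A.det)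
    (R : Finset (Vec d)) (hR0 : (0 : Vec d) ∉ R)
    (hRlat : ∀ ρ ∈ R, ρ ∈ Lattice d A)
    (hRsym : ∀ ρ ∈ R, -ρ ∈ R)
    (hRspan : ∀ x ∈ Lattice d A, ∃ c : Vec d → ℤ, x = ∑ ρ ∈ R, (c ρ : ℝ) • ρ)
    (C : Vec d → Vec d → Fin N → Fin N → ℝ)
    (hCsym : ∀ σ ρ i j, C σ ρ i j = C ρ σ j i)
    (hCpt : ∀ σ ρ, C σ ρ = C (-σ) (-ρ))
    (hstab : IsStable d N A R C)
    (G : Vec d → Fin N → Fin N → ℝ) (hG : IsLatticeGreen d N A R C G)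
    (u : Vec d → Vec N) (hu : InH1 A R u)
    (p α : ℕ) (c : ℝ) (hc : 0 < c)
    (hbound : ∀ z : Fin d → ℤ,
      enorm (Hop d N R C u (latticePt d A z)) ≤
        c * ang (latticePt d A z) ^ (-(d : ℝ) - p) *
          Real.log (ang (latticePt d A z)) ^ α)
    (hmom : ∀ i : ℕ, i < p → ∀ (a : Fin N) (js : Fin i → Fin d),
      HasSum (fun z : Fin d → ℤ =>
        Hop d N R C u (latticePt d A z) a * ∏ m, latticePt d A z (js m)) 0) :
    (∀ j : ℕ, j = 1 ∨ j = 2 → ∃ Cj : ℝ, ∀ z : Fin d → ℤ,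
        DnormJ R j u (latticePt d A z) ≤
          Cj * ang (latticePt d A z) ^ ((2 : ℝ) - d - p - j) *
            Real.log (ang (latticePt d A z)) ^ (α + 1)) ∧
    (∀ j : ℕ, 3 ≤ j →
      (∀ m : ℕ, 1 ≤ m → m ≤ j - 2 → ∀ z : Fin d → ℤ,
          DnormJ R m (Hop d N R C u) (latticePt d A z) ≤
            c * ang (latticePt d A z) ^ (-(d : ℝ) - p - m) *
              Real.log (ang (latticePt d A z)) ^ α) →
      ∃ Cj : ℝ, ∀ z : Fin d → ℤ,
        DnormJ R j u (latticePt d A z) ≤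
          Cj * ang (latticePt d A z) ^ ((2 : ℝ) - d - p - j) *
            Real.log (ang (latticePt d A z)) ^ (α + 1)) := by
  choose s0 hs0 using hRlat
  obtain ⟨s, hs⟩ : ∃ s : {x // x ∈ R} → E d, ∀ ρ, latticePt d A (s ρ) = ρ :=
    ⟨fun ρ => s0 ρ ρ.2, fun ρ => hs0 ρ ρ.2⟩
  have hcl := span_closure A R s hs hA hRspan
  have hK : ∀ (σ ρ : {x // x ∈ R}) (i j : Fin N),
      (fun σ ρ : {x // x ∈ R} => C σ ρ) σ ρ i j = (fun σ ρ : {x // x ∈ R} => C σ ρ) ρ σ j i :=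
    fun σ ρ i j => hCsym _ _ _ _
  have hU : ∀ (a : E d) (k : Fin N), LO 0 (Df a ((fun k z => u (latticePt d A z) k) k)) :=
    fun a k => LO_of_H1 A R s hs hcl u hu a k
  have hHZ : ∀ i, HZ s (fun σ ρ : {x // x ∈ R} => C σ ρ) (fun k z => u (latticePt d A z) k) i =
      fun z => Hop d N R C u (latticePt d A z) i :=
    fun i => funext fun z => (Hop_HZ A R s hs C u z i).symm
  have hk : ∀ i, Kill p (HZ s (fun σ ρ : {x // x ∈ R} => C σ ρ)
      (fun k z => u (latticePt d A z) k) i) := by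
    intro i
    rw [hHZ]
    exact mom_tr A hA p _ fun n hn js => hmom n hn i js
  have hF0 : ∀ i, BD (-(d : ℝ) - p) α (HZ s (fun σ ρ : {x // x ∈ R} => C σ ρ)
      (fun k z => u (latticePt d A z) k) i) := by
    intro i
    rw [hHZ]
    exact BD_of_ang A hA _ α _ c fun z => (abs_le_enorm _ i).trans (hbound z)
  have hlz : ∀ z : E d, latticePt d A z = 0 ↔ z = 0 := by
    intro z
    have h0 : latticePt d A (0 : E d) = 0 := by rw [← lpH_apply, map_zero]
    exact ⟨fun h => lp_inj A hA (h.trans h0.symm), fun h => h ▸ h0⟩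
  have hGG : ∀ (k i : Fin N) (z : E d),
      HZ s (fun σ ρ : {x // x ∈ R} => C σ ρ)
        (fun i => (fun i k z => G (latticePt d A z) i k : Fin N → Fin N → E d → ℝ) i k) i z =
        if z = 0 then (Pi.single k (1 : ℝ) : Fin N → ℝ) i else 0 := by
    intro k i z
    have h1 := Hop_HZ A R s hs C (col G k) z i
    rw [hG.1 k z] at h1
    refine Eq.trans h1.symm ?_
    simp only [hlz]
    split_ifs <;> rfl
  have hGd : ∀ l : List (E d), l ≠ [] → ∀ i k, BD (2 - (d : ℝ) - (l.length : ℝ)) 0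
      (DL l ((fun i k z => G (latticePt d A z) i k : Fin N → Fin N → E d → ℝ) i k)) := by
    intro l hl i k
    obtain ⟨cj, hcj⟩ := hG.2 l.length (List.length_pos_iff.2 hl)
    refine lists_BD A R s hs hA hcl (col G k) l.length 0 _ cj (fun z => ?_) i l rfl
    rw [pow_zero, mul_one]
    refine le_trans ?_ (hcj z)
    refine le_trans (le_abs_self _) ?_
    exact le_sqrt_sum Finset.univ (fun k => DnormJ R l.length (col G k) (latticePt d A z)) k
      (Finset.mem_univ k)
  have hbig : ∀ n : ℕ, (∀ m : ℕ, 1 ≤ m → m ≤ n → ∀ z : Fin d → ℤ,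
          DnormJ R m (Hop d N R C u) (latticePt d A z) ≤
            c * ang (latticePt d A z) ^ (-(d : ℝ) - p - m) *
              Real.log (ang (latticePt d A z)) ^ α) →
      ∃ Cj : ℝ, ∀ z : Fin d → ℤ,
        DnormJ R (n + 2) u (latticePt d A z) ≤
          Cj * ang (latticePt d A z) ^ ((2 : ℝ) - d - p - (n + 2 : ℕ)) *
            Real.log (ang (latticePt d A z)) ^ (α + 1) := by
    intro n hn
    refine DnormJ_BD A R s hs hA u (n + 2) (α + 1) _ fun k l hl => ?_
    refine thmZj s (fun σ ρ : {x // x ∈ R} => C σ ρ) hd hK (fun k z => u (latticePt d A z) k) hU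
      p α n ?_ hk (fun i k z => G (latticePt d A z) i k) hGG hGd k l hl
    intro l hl i
    by_cases hl0 : l = []
    · subst hl0
      have := hF0 i
      simpa [DL] using this
    · rw [hHZ]
      exact lists_BD A R s hs hA hcl (Hop d N R C u) l.length α _ c
        (hn l.length (List.length_pos_iff.2 hl0) hl) i l rfl
  refine ⟨?_, ?_⟩
  · rintro j (rfl | rfl)
    · refine DnormJ_BD A R s hs hA u 1 (α + 1) _ fun k l hl => ?_
      obtain ⟨a, rfl⟩ := List.length_eq_one_iff.1 hl
      have := (thmZ s (fun σ ρ : {x // x ∈ R} => C σ ρ) hd hK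
        (fun k z => u (latticePt d A z) k) hU p α hF0 hk
        (fun i k z => G (latticePt d A z) i k) hGG hGd k a).1
      have e : (2 : ℝ) - d - p - (1 : ℕ) = 1 - d - p := by push_cast; ring
      rw [e]
      exact this
    · exact hbig 0 fun m h1 h2 => by omega
  · intro j hj h
    obtain ⟨n, rfl⟩ : ∃ n, j = n + 2 := ⟨j - 2, by omega⟩
    exact hbig n h

end Defect
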